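/- arXiv:2002.00946 — 2 statements merged into one kernel-verified Lean document; each statement's English description precedes it below -/
import Mathlib

section
/- Let m be a positive integer. There exists a constant D_m > 0 depending only on m such that for all n ≥ 1, all p_1, ..., p_m ∈ [1, ∞], and every unimodular m-linear form A : ℓ_{p_1}^n × ⋯ × ℓ_{p_m}^n → 𝕂 (i.e., every m-linear form all of whose coefficients A(e_{j_1},...,e_{j_m}) have modulus 1), one has ‖A‖ ≥ D_m · n^{1/ρ + Σ_{k=1}^m max{1/2 − 1/p_k, 0}}, where ρ := min_{1≤k≤m} max{2, p_k*} and p_k* is the conjugate exponent of p_k. In other words, the exponent 1/ρ + Σ_{k=1}^m max{1/2 − 1/p_k, 0} in the Kahane–Salem–Zygmund-type upper bound is optimal. -/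
open scoped BigOperators ENNReal

noncomputable section

/-- The `ℓ_p` norm on `𝕂^n`, for `p ∈ [1, ∞]` (sup norm when `p = ∞`). -/
def lpNorm {𝕂 : Type*} [RCLike 𝕂] (p : ℝ≥0∞) {n : ℕ} (x : Fin n → 𝕂) : ℝ :=
  if p = ∞ then ⨆ j, ‖x j‖ else (∑ j, ‖x j‖ ^ p.toReal) ^ (1 / p.toReal)

/-- The operator norm of an `m`-linear form `A : ℓ_{p 1}^{n 1} × ⋯ × ℓ_{p m}^{n m} → 𝕂`,
i.e. the supremum of `‖A x‖` over all `x` with `‖x k‖_{p k} ≤ 1` for every `k`. -/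
def opNorm {𝕂 : Type*} [RCLike 𝕂] {m : ℕ} {n : Fin m → ℕ} (p : Fin m → ℝ≥0∞)
    (A : MultilinearMap 𝕂 (fun k => Fin (n k) → 𝕂) 𝕂) : ℝ :=
  sSup {t | ∃ x : ∀ k, Fin (n k) → 𝕂, (∀ k, lpNorm (p k) (x k) ≤ 1) ∧ t = ‖A x‖}

/-- A multilinear form is unimodular if all its coefficients `A (e_{j 1}, …, e_{j m})`
have modulus 1. -/
def Unimodular {𝕂 : Type*} [RCLike 𝕂] {m : ℕ} {n : Fin m → ℕ}
    (A : MultilinearMap 𝕂 (fun k => Fin (n k) → 𝕂) 𝕂) : Prop :=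
  ∀ j : ∀ k, Fin (n k), ‖A (fun k => Pi.single (j k) 1)‖ = 1

/-- The `m`-linear form `z ↦ ∑_j c j • z^{(1)}_{j 1} ⋯ z^{(m)}_{j m}` determined by the
coefficients `c`. -/
def coeffForm {𝕂 : Type*} [RCLike 𝕂] {m : ℕ} {n : Fin m → ℕ} (c : (∀ k, Fin (n k)) → 𝕂) :
    MultilinearMap 𝕂 (fun k => Fin (n k) → 𝕂) 𝕂 :=
  ∑ j : ∀ k, Fin (n k), (MultilinearMap.mkPiRing 𝕂 (Fin m) (c j)).compLinearMap
    fun k => LinearMap.proj (j k)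

/-- The conjugate exponent `p*` of `p ∈ [1,∞]`, defined by `1/p + 1/p* = 1`. -/
def conjExp (p : ℝ≥0∞) : ℝ≥0∞ := (1 - 1/p)⁻¹

/-!
Comparing the second and fourth moments of a random signed sum gives a Hilbert-space-valued
Khinchine inequality with constant `2`. Iterating it over all `d` variables other than a chosen
`k₀`, and aligning the phases of the remaining coefficients in the variable `k₀`, gives a mixed
`(ℓ₁, ℓ₂)`-Littlewood inequality attained at vectors with unimodular entries. For unimodular
coefficients it reads `2 ^ d * ‖A‖ ≥ √n_{k₀} * ∏ k, n_k ^ (1/2 - 1/p_k)` after normalising these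
vectors in `ℓ_{p_k}`.

A factor with `p_k < 2` and `k ≠ k₀` makes this bound worse, but it disappears when the form is
restricted to a single coordinate of the `k`-th variable. For `k = k₀` the factor
`n ^ (1/2 + min (1/2 - 1/p_k) 0)` that remains besides `n ^ max (1/2 - 1/p_k) 0` is
`n ^ (1 / max 2 p_k*)`, and `k₀` is chosen to attain the minimum defining `ρ`.
-/

section Rademacher

variable {n : ℕ}

lemma expect_signs_succ (f : (Fin (n + 1) → ℤˣ) → ℝ) :
    𝔼 ε, f ε = 𝔼 ε : Fin n → ℤˣ, (f (Fin.cons 1 ε) + f (Fin.cons (-1) ε)) / 2 := by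
  simp only [Fintype.expect_eq_sum_div_card, ← (Fin.consEquiv fun _ => ℤˣ).sum_comp f,
    Fintype.sum_prod_type_right, UnitsInt.univ, ← Finset.sum_div]
  rw [div_div]
  congr 1
  · exact Finset.sum_congr rfl fun ε _ => Finset.sum_pair (by decide)
  · simp [pow_succ']

variable {E : Type*} [NormedAddCommGroup E] [InnerProductSpace ℝ E]

lemma norm_add_pow_four_add_norm_sub_pow_four_le (w v : E) :
    ‖w + v‖ ^ 4 + ‖w - v‖ ^ 4 ≤ 2 * (‖w‖ ^ 4 + 6 * ‖w‖ ^ 2 * ‖v‖ ^ 2 + ‖v‖ ^ 4) := by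
  have inner_sq_le : inner ℝ w v ^ 2 ≤ ‖w‖ ^ 2 * ‖v‖ ^ 2 := by
    rw [← mul_pow, ← sq_abs]
    gcongr
    exact abs_real_inner_le_norm w v
  calc ‖w + v‖ ^ 4 + ‖w - v‖ ^ 4 = (‖w + v‖ ^ 2) ^ 2 + (‖w - v‖ ^ 2) ^ 2 := by ring
    _ = 2 * (‖w‖ ^ 2 + ‖v‖ ^ 2) ^ 2 + 8 * inner ℝ w v ^ 2 := by
      rw [norm_add_sq_real, norm_sub_sq_real]
      ring
    _ ≤ 2 * (‖w‖ ^ 2 + ‖v‖ ^ 2) ^ 2 + 8 * (‖w‖ ^ 2 * ‖v‖ ^ 2) := by gcongr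
    _ = 2 * (‖w‖ ^ 4 + 6 * ‖w‖ ^ 2 * ‖v‖ ^ 2 + ‖v‖ ^ 4) := by ring

lemma expect_norm_signed_sum_sq (v : Fin n → E) :
    𝔼 ε : Fin n → ℤˣ, ‖∑ i, ε i • v i‖ ^ 2 = ∑ i, ‖v i‖ ^ 2 := by
  induction n with
  | zero => simp
  | succ n ih =>
    have parallelogram (s : E) :
        (‖v 0 + s‖ ^ 2 + ‖-v 0 + s‖ ^ 2) / 2 = ‖v 0‖ ^ 2 + ‖s‖ ^ 2 := by
      rw [neg_add_eq_sub, ← norm_neg (s - v 0), neg_sub, norm_add_sq_real, norm_sub_sq_real]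
      ring
    simp only [expect_signs_succ, Fin.sum_univ_succ, Fin.cons_zero, Fin.cons_succ, one_smul,
      Units.neg_smul, parallelogram, Finset.expect_add_distrib, Fintype.expect_const,
      ih fun i => v i.succ]

lemma expect_norm_signed_sum_pow_four_le (v : Fin n → E) :
    𝔼 ε : Fin n → ℤˣ, ‖∑ i, ε i • v i‖ ^ 4 ≤ 3 * (∑ i, ‖v i‖ ^ 2) ^ 2 := by
  induction n with
  | zero => simp
  | succ n ih =>
    have average_le (s : E) : (‖v 0 + s‖ ^ 4 + ‖-v 0 + s‖ ^ 4) / 2 ≤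
        ‖v 0‖ ^ 4 + 6 * ‖v 0‖ ^ 2 * ‖s‖ ^ 2 + ‖s‖ ^ 4 := by
      rw [neg_add_eq_sub, ← norm_neg (s - v 0), neg_sub]
      linarith [norm_add_pow_four_add_norm_sub_pow_four_le (v 0) s]
    simp only [expect_signs_succ, Fin.sum_univ_succ, Fin.cons_zero, Fin.cons_succ, one_smul,
      Units.neg_smul]
    set S : ℝ := ∑ i : Fin n, ‖v i.succ‖ ^ 2
    calc 𝔼 ε : Fin n → ℤˣ, (‖v 0 + ∑ i, ε i • v i.succ‖ ^ 4 +
          ‖-v 0 + ∑ i, ε i • v i.succ‖ ^ 4) / 2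
        ≤ 𝔼 ε : Fin n → ℤˣ, (‖v 0‖ ^ 4 + 6 * ‖v 0‖ ^ 2 * ‖∑ i, ε i • v i.succ‖ ^ 2 +
          ‖∑ i, ε i • v i.succ‖ ^ 4) := Finset.expect_le_expect fun ε _ => average_le _
      _ = ‖v 0‖ ^ 4 + 6 * ‖v 0‖ ^ 2 * S + 𝔼 ε : Fin n → ℤˣ, ‖∑ i, ε i • v i.succ‖ ^ 4 := by
        rw [Finset.expect_add_distrib, Finset.expect_add_distrib, Fintype.expect_const,
          ← Finset.mul_expect, expect_norm_signed_sum_sq]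
      _ ≤ ‖v 0‖ ^ 4 + 6 * ‖v 0‖ ^ 2 * S + 3 * S ^ 2 := by gcongr; exact ih _
      _ ≤ 3 * (‖v 0‖ ^ 2 + S) ^ 2 := by nlinarith [sq_nonneg (‖v 0‖ ^ 2)]

-- Bounds a first moment from below by the second and fourth moments; the coefficients make
-- `x = 2σ` a double zero of the difference of the two sides.
lemma twelve_mul_sq_mul_sq_sub_pow_four_le {σ x : ℝ} (hσ : 0 ≤ σ) (hx : 0 ≤ x) :
    12 * σ ^ 2 * x ^ 2 - x ^ 4 ≤ 16 * σ ^ 3 * x := by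
  have factored : 0 ≤ x * ((x - 2 * σ) ^ 2 * (x + 4 * σ)) := by positivity
  linarith [show x * ((x - 2 * σ) ^ 2 * (x + 4 * σ)) =
    16 * σ ^ 3 * x - (12 * σ ^ 2 * x ^ 2 - x ^ 4) by ring]

lemma sqrt_sum_norm_sq_le_two_mul_expect (v : Fin n → E) :
    √(∑ i, ‖v i‖ ^ 2) ≤ 2 * 𝔼 ε : Fin n → ℤˣ, ‖∑ i, ε i • v i‖ := by
  set σ : ℝ := √(∑ i, ‖v i‖ ^ 2)
  have σ_sq : ∑ i, ‖v i‖ ^ 2 = σ ^ 2 := (Real.sq_sqrt (by positivity)).symm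
  set X : (Fin n → ℤˣ) → ℝ := fun ε => ‖∑ i, ε i • v i‖
  have expect_nonneg : 0 ≤ 𝔼 ε, X ε := Finset.expect_nonneg fun ε _ => norm_nonneg _
  rcases (Real.sqrt_nonneg _ : 0 ≤ σ).eq_or_lt with σ_zero | σ_pos
  · linarith
  have moments : 9 * σ ^ 4 ≤ 16 * σ ^ 3 * 𝔼 ε, X ε := by
    calc 9 * σ ^ 4 = 12 * σ ^ 2 * σ ^ 2 - 3 * (σ ^ 2) ^ 2 := by ring
      _ ≤ 12 * σ ^ 2 * 𝔼 ε, X ε ^ 2 - 𝔼 ε, X ε ^ 4 := by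
        rw [← σ_sq, expect_norm_signed_sum_sq]
        gcongr
        exact expect_norm_signed_sum_pow_four_le v
      _ = 𝔼 ε, (12 * σ ^ 2 * X ε ^ 2 - X ε ^ 4) := by
        rw [Finset.expect_sub_distrib, Finset.mul_expect]
      _ ≤ 𝔼 ε, 16 * σ ^ 3 * X ε := Finset.expect_le_expect fun ε _ =>
        twelve_mul_sq_mul_sq_sub_pow_four_le σ_pos.le (norm_nonneg _)
      _ = 16 * σ ^ 3 * 𝔼 ε, X ε := (Finset.mul_expect ..).symm
  have nine_le : 9 * σ ≤ 16 * 𝔼 ε, X ε :=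
    le_of_mul_le_mul_left (by linarith) (pow_pos σ_pos 3)
  linarith

lemma exists_signs_sum_sqrt_sum_norm_sq_le {T : Type*} [Fintype T] (v : T → Fin n → E) :
    ∃ ε : Fin n → ℤˣ, ∑ t, √(∑ i, ‖v t i‖ ^ 2) ≤ 2 * ∑ t, ‖∑ i, ε i • v t i‖ := by
  suffices average : ∑ t, √(∑ i, ‖v t i‖ ^ 2) ≤
      𝔼 ε : Fin n → ℤˣ, 2 * ∑ t, ‖∑ i, ε i • v t i‖ by
    simpa using Finset.exists_le_of_le_expect Finset.univ_nonempty average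
  rw [← Finset.mul_expect, Finset.expect_sum_comm, Finset.mul_sum]
  exact Finset.sum_le_sum fun t _ => sqrt_sum_norm_sq_le_two_mul_expect (v t)

end Rademacher

section MixedLittlewood

variable {𝕂 : Type*} [RCLike 𝕂] {d : ℕ} {n : Fin (d + 1) → ℕ}

lemma insertNth_single (k₀ : Fin (d + 1)) (i : Fin (n k₀))
    (j : ∀ k, Fin (n (k₀.succAbove k))) :
    (k₀.insertNth (Pi.single i 1) fun k => Pi.single (j k) 1 : ∀ k, Fin (n k) → 𝕂) =
      fun k => Pi.single ((k₀.insertNth i j : ∀ k, Fin (n k)) k) 1 :=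
  Fin.insertNth_eq_iff.2 ⟨by simp, by ext; simp [Fin.removeNth]⟩

lemma norm_insertNth_apply {k₀ : Fin (d + 1)} {x : Fin (n k₀) → 𝕂}
    {y : ∀ k, Fin (n (k₀.succAbove k)) → 𝕂} (norm_x : ∀ i, ‖x i‖ = 1)
    (norm_y : ∀ k i, ‖y k i‖ = 1) (k : Fin (d + 1)) (i : Fin (n k)) :
    ‖(k₀.insertNth x y : ∀ k, Fin (n k) → 𝕂) k i‖ = 1 := by
  induction k using k₀.succAboveCases with
  | x => simpa using norm_x i
  | p k => simpa using norm_y k i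

lemma map_insertNth_eq_sum {E : Type*} [AddCommGroup E] [Module 𝕂 E]
    (A : MultilinearMap 𝕂 (fun k => Fin (n k) → 𝕂) E) (k₀ : Fin (d + 1)) (x : Fin (n k₀) → 𝕂)
    (y : ∀ k, Fin (n (k₀.succAbove k)) → 𝕂) :
    A (k₀.insertNth x y) = ∑ i, x i • A (k₀.insertNth (Pi.single i 1) y) := by
  have expand : A.curryMid k₀ x = ∑ i, x i • A.curryMid k₀ (Pi.single i 1) := by
    conv_lhs => rw [pi_eq_sum_univ' x, map_sum]
    simp only [map_smul]
  simpa [sum_apply] using DFunLike.congr_fun expand y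

variable {E : Type*} [NormedAddCommGroup E]

/-- The slices of `A` at the basis vectors in the variable `k₀`, bundled into one multilinear map
in the remaining variables. Its values lie in the `ℓ₂`-sum of copies of `E`, which is again a
Hilbert space if `E` is one, so that Khinchine's inequality can be iterated. -/
def slices [NormedSpace 𝕂 E] (A : MultilinearMap 𝕂 (fun k => Fin (n k) → 𝕂) E)
    (k₀ : Fin (d + 1)) :
    MultilinearMap 𝕂 (fun k => Fin (n (k₀.succAbove k)) → 𝕂) (PiLp 2 fun _ : Fin (n k₀) => E) :=
  (WithLp.linearEquiv 2 𝕂 (Fin (n k₀) → E)).symm.toLinearMap.compMultilinearMap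
    (MultilinearMap.pi fun i => A.curryMid k₀ (Pi.single i 1))

lemma norm_slices_sq [NormedSpace 𝕂 E] (A : MultilinearMap 𝕂 (fun k => Fin (n k) → 𝕂) E)
    (k₀ : Fin (d + 1)) (y : ∀ k, Fin (n (k₀.succAbove k)) → 𝕂) :
    ‖slices A k₀ y‖ ^ 2 = ∑ i, ‖A (k₀.insertNth (Pi.single i 1) y)‖ ^ 2 :=
  PiLp.norm_sq_eq_of_L2 _ _

lemma sum_norm_slices_single_sq [NormedSpace 𝕂 E]
    (A : MultilinearMap 𝕂 (fun k => Fin (n k) → 𝕂) E) (k₀ : Fin (d + 1)) :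
    ∑ j : ∀ k, Fin (n (k₀.succAbove k)), ‖slices A k₀ fun k => Pi.single (j k) 1‖ ^ 2 =
      ∑ j : ∀ k, Fin (n k), ‖A fun k => Pi.single (j k) 1‖ ^ 2 := by
  rw [← (Fin.insertNthEquiv (fun k => Fin (n k)) k₀).sum_comp, Fintype.sum_prod_type_right]
  simp only [norm_slices_sq, insertNth_single, Fin.insertNthEquiv_apply]

lemma exists_unimodular_sum_sqrt_sum_norm_sq_le {n : Fin d → ℕ} {T : Type*} [Fintype T]
    [InnerProductSpace 𝕂 E] (A : T → MultilinearMap 𝕂 (fun k => Fin (n k) → 𝕂) E) :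
    ∃ y : ∀ k, Fin (n k) → 𝕂, (∀ k i, ‖y k i‖ = 1) ∧
      ∑ t, √(∑ j : ∀ k, Fin (n k), ‖A t fun k => Pi.single (j k) 1‖ ^ 2) ≤
        2 ^ d * ∑ t, ‖A t y‖ := by
  induction d generalizing E with
  | zero => exact ⟨fun k => Pi.single ((default : ∀ k, Fin (n k)) k) 1, isEmptyElim, by simp⟩
  | succ d ih =>
    let := InnerProductSpace.rclikeToReal 𝕂 E
    obtain ⟨y, norm_y, slices_le⟩ := ih fun t => slices (A t) 0
    obtain ⟨ε, signed_sum_le⟩ := exists_signs_sum_sqrt_sum_norm_sq_le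
      fun t i => A t ((0 : Fin (d + 1)).insertNth (Pi.single i 1) y)
    set x : Fin (n 0) → 𝕂 := fun i => ((ε i : ℤ) : 𝕂)
    have norm_x (i : Fin (n 0)) : ‖x i‖ = 1 := by
      rcases Int.units_eq_one_or (ε i) with h | h <;> simp [x, h]
    have map_x (t : T) : ∑ i, ε i • A t ((0 : Fin (d + 1)).insertNth (Pi.single i 1) y) =
        A t ((0 : Fin (d + 1)).insertNth x y) := by
      simp only [map_insertNth_eq_sum (A t) 0 x y, x, Int.cast_smul_eq_zsmul, Units.smul_def]
    refine ⟨(0 : Fin (d + 1)).insertNth x y, norm_insertNth_apply norm_x norm_y, ?_⟩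
    simp only [sum_norm_slices_single_sq] at slices_le
    simp only [← norm_slices_sq, Real.sqrt_sq (norm_nonneg _), map_x] at signed_sum_le
    calc ∑ t, √(∑ j : ∀ k, Fin (n k), ‖A t fun k => Pi.single (j k) 1‖ ^ 2)
        ≤ 2 ^ d * ∑ t, ‖slices (A t) 0 y‖ := slices_le
      _ ≤ 2 ^ d * (2 * ∑ t, ‖A t ((0 : Fin (d + 1)).insertNth x y)‖) := by gcongr
      _ = 2 ^ (d + 1) * ∑ t, ‖A t ((0 : Fin (d + 1)).insertNth x y)‖ := by ring

lemma exists_unimodular_norm_map_insertNth_eq_sum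
    (A : MultilinearMap 𝕂 (fun k => Fin (n k) → 𝕂) 𝕂) (k₀ : Fin (d + 1))
    (y : ∀ k, Fin (n (k₀.succAbove k)) → 𝕂) :
    ∃ x : Fin (n k₀) → 𝕂, (∀ i, ‖x i‖ = 1) ∧
      ‖A (k₀.insertNth x y)‖ = ∑ i, ‖A (k₀.insertNth (Pi.single i 1) y)‖ := by
  choose x norm_x mul_x using fun i =>
    RCLike.exists_norm_eq_mul_self (A (k₀.insertNth (Pi.single i 1) y))
  refine ⟨x, norm_x, ?_⟩
  simp only [map_insertNth_eq_sum A k₀ x y, smul_eq_mul, ← mul_x]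
  rw [← RCLike.ofReal_sum, RCLike.norm_ofReal, abs_of_nonneg (by positivity)]

theorem exists_unimodular_mixed_littlewood
    (A : MultilinearMap 𝕂 (fun k => Fin (n k) → 𝕂) 𝕂) (k₀ : Fin (d + 1)) :
    ∃ y : ∀ k, Fin (n k) → 𝕂, (∀ k i, ‖y k i‖ = 1) ∧
      ∑ i, √(∑ j : ∀ k, Fin (n (k₀.succAbove k)),
        ‖A fun k => Pi.single ((k₀.insertNth i j : ∀ k, Fin (n k)) k) 1‖ ^ 2) ≤
        2 ^ d * ‖A y‖ := by
  obtain ⟨y, norm_y, slices_le⟩ :=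
    exists_unimodular_sum_sqrt_sum_norm_sq_le fun i => A.curryMid k₀ (Pi.single i 1)
  obtain ⟨x, norm_x, norm_map⟩ := exists_unimodular_norm_map_insertNth_eq_sum A k₀ y
  refine ⟨k₀.insertNth x y, norm_insertNth_apply norm_x norm_y, ?_⟩
  simpa only [norm_map, MultilinearMap.curryMid_apply_apply, insertNth_single] using slices_le

end MixedLittlewood

section OperatorNorm

lemma extend_single {ι κ M : Type*} [DecidableEq ι] [DecidableEq κ] [Zero M] {f : ι → κ}
    (hf : f.Injective) (i : ι) (a : M) :
    Function.extend f (Pi.single i a) 0 = Pi.single (f i) a := by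
  ext j
  by_cases hj : ∃ i, f i = j
  · obtain ⟨i', rfl⟩ := hj
    simp only [hf.extend_apply, Pi.single_apply, hf.eq_iff]
  · rw [Function.extend_apply' _ _ _ hj, Pi.single_eq_of_ne fun hji => hj ⟨i, hji.symm⟩,
      Pi.zero_apply]

variable {𝕂 : Type*} [RCLike 𝕂]

lemma lpNorm_eq_norm_toLp {p : ℝ≥0∞} (hp : p ≠ 0) {n : ℕ} (x : Fin n → 𝕂) :
    lpNorm p x = ‖WithLp.toLp p x‖ := by
  unfold lpNorm
  split_ifs with p_top
  · subst p_top
    rfl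
  · exact (PiLp.norm_eq_sum (ENNReal.toReal_pos hp p_top) _).symm

lemma norm_apply_le_lpNorm {p : ℝ≥0∞} (hp : 1 ≤ p) {n : ℕ} (x : Fin n → 𝕂) (i : Fin n) :
    ‖x i‖ ≤ lpNorm p x := by
  have : Fact (1 ≤ p) := ⟨hp⟩
  rw [lpNorm_eq_norm_toLp (zero_lt_one.trans_le hp).ne']
  exact PiLp.norm_apply_le (WithLp.toLp p x) i

lemma lpNorm_of_norm_eq {p : ℝ≥0∞} {n : ℕ} (hp : p ≠ 0) (hn : n ≠ 0)
    {c : ℝ} {x : Fin n → 𝕂} (norm_x : ∀ i, ‖x i‖ = c) :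
    lpNorm p x = (n : ℝ) ^ (1 / p).toReal * c := by
  have : NeZero n := ⟨hn⟩
  have c_nonneg : 0 ≤ c := norm_x 0 ▸ norm_nonneg _
  simp only [lpNorm, norm_x]
  split_ifs with p_top
  · simp [p_top]
  · have p_pos : 0 < p.toReal := ENNReal.toReal_pos hp p_top
    rw [Finset.sum_const, Finset.card_univ, Fintype.card_fin, nsmul_eq_mul,
      Real.mul_rpow (by positivity) (by positivity), ← Real.rpow_mul c_nonneg,
      mul_one_div_cancel p_pos.ne', Real.rpow_one, ENNReal.toReal_div, ENNReal.toReal_one]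

lemma lpNorm_extend_le {p : ℝ≥0∞} (hp : p ≠ 0) {N n : ℕ} {f : Fin N → Fin n}
    (hf : f.Injective) (x : Fin N → 𝕂) : lpNorm p (Function.extend f x 0) ≤ lpNorm p x := by
  unfold lpNorm
  split_ifs with p_top
  · refine Real.iSup_le (fun j => ?_) (Real.iSup_nonneg fun i => norm_nonneg _)
    by_cases hj : ∃ i, f i = j
    · obtain ⟨i, rfl⟩ := hj
      rw [hf.extend_apply]
      exact le_ciSup (f := fun i => ‖x i‖) (Set.finite_range _).bddAbove i
    · rw [Function.extend_apply' _ _ _ hj, Pi.zero_apply, norm_zero]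
      exact Real.iSup_nonneg fun i => norm_nonneg _
  · refine le_of_eq ?_
    congr 1
    refine (Fintype.sum_of_injective _ hf _ _ (fun j hj => ?_) fun i => ?_).symm
    · rw [Function.extend_apply' _ _ _ hj, Pi.zero_apply, norm_zero,
        Real.zero_rpow (ENNReal.toReal_pos hp p_top).ne']
    · rw [hf.extend_apply]

variable {m : ℕ} {n : Fin m → ℕ} {p : Fin m → ℝ≥0∞}

lemma norm_map_le_sum_norm_coeff (A : MultilinearMap 𝕂 (fun k => Fin (n k) → 𝕂) 𝕂)
    {x : ∀ k, Fin (n k) → 𝕂} (hx : ∀ k i, ‖x k i‖ ≤ 1) :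
    ‖A x‖ ≤ ∑ j : ∀ k, Fin (n k), ‖A fun k => Pi.single (j k) 1‖ := by
  rw [funext fun k => pi_eq_sum_univ' (x k), MultilinearMap.map_sum]
  refine norm_sum_le_of_le _ fun j _ => ?_
  rw [MultilinearMap.map_smul_univ, norm_smul, norm_prod]
  exact mul_le_of_le_one_left (norm_nonneg _)
    (Finset.prod_le_one (fun _ _ => norm_nonneg _) fun k _ => hx k (j k))

lemma norm_map_le_opNorm (hp : ∀ k, 1 ≤ p k)
    (A : MultilinearMap 𝕂 (fun k => Fin (n k) → 𝕂) 𝕂) {x : ∀ k, Fin (n k) → 𝕂}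
    (hx : ∀ k, lpNorm (p k) (x k) ≤ 1) : ‖A x‖ ≤ opNorm p A := by
  refine le_csSup ⟨∑ j : ∀ k, Fin (n k), ‖A fun k => Pi.single (j k) 1‖, ?_⟩ ⟨x, hx, rfl⟩
  rintro _ ⟨y, hy, rfl⟩
  exact norm_map_le_sum_norm_coeff A fun k i => (norm_apply_le_lpNorm (hp k) _ i).trans (hy k)

lemma norm_map_le_prod_rpow_mul_opNorm (hp : ∀ k, 1 ≤ p k) (hn : ∀ k, n k ≠ 0)
    (A : MultilinearMap 𝕂 (fun k => Fin (n k) → 𝕂) 𝕂) {y : ∀ k, Fin (n k) → 𝕂}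
    (norm_y : ∀ k i, ‖y k i‖ = 1) :
    ‖A y‖ ≤ (∏ k, (n k : ℝ) ^ (1 / p k).toReal) * opNorm p A := by
  set c : Fin m → ℝ := fun k => (n k : ℝ) ^ (1 / p k).toReal
  have c_pos (k : Fin m) : 0 < c k :=
    Real.rpow_pos_of_pos (Nat.cast_pos.2 (Nat.pos_of_ne_zero (hn k))) _
  have norm_inv_c (k : Fin m) : ‖((c k)⁻¹ : 𝕂)‖ = (c k)⁻¹ := by
    rw [norm_inv, RCLike.norm_of_nonneg (c_pos k).le]
  have normalized (k : Fin m) : lpNorm (p k) (((c k)⁻¹ : 𝕂) • y k) ≤ 1 := by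
    have norm_entry (i : Fin (n k)) : ‖(((c k)⁻¹ : 𝕂) • y k) i‖ = (c k)⁻¹ := by
      rw [Pi.smul_apply, norm_smul, norm_inv_c, norm_y, mul_one]
    rw [lpNorm_of_norm_eq (zero_lt_one.trans_le (hp k)).ne' (hn k) norm_entry]
    exact (mul_inv_cancel₀ (c_pos k).ne').le
  have key := norm_map_le_opNorm hp A normalized
  rw [MultilinearMap.map_smul_univ, norm_smul, norm_prod,
    Finset.prod_congr rfl fun k _ => norm_inv_c k, Finset.prod_inv_distrib] at key
  exact (inv_mul_le_iff₀ (Finset.prod_pos fun k _ => c_pos k)).1 key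

lemma opNorm_compLinearMap_le {N : Fin m → ℕ} (hp : ∀ k, 1 ≤ p k)
    (A : MultilinearMap 𝕂 (fun k => Fin (n k) → 𝕂) 𝕂)
    (L : ∀ k, (Fin (N k) → 𝕂) →ₗ[𝕂] Fin (n k) → 𝕂)
    (hL : ∀ k x, lpNorm (p k) (L k x) ≤ lpNorm (p k) x) :
    opNorm p (A.compLinearMap L) ≤ opNorm p A := by
  have opNorm_nonneg : 0 ≤ opNorm p A := Real.sSup_nonneg (by rintro _ ⟨x, -, rfl⟩; positivity)
  refine Real.sSup_le ?_ opNorm_nonneg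
  rintro _ ⟨x, hx, rfl⟩
  exact norm_map_le_opNorm hp A fun k => (hL k _).trans (hx k)

end OperatorNorm

section LowerBound

variable {𝕂 : Type*} [RCLike 𝕂] {d : ℕ} {n : Fin (d + 1) → ℕ} {p : Fin (d + 1) → ℝ≥0∞}

lemma exists_unimodular_sqrt_mul_prod_sqrt_le
    (A : MultilinearMap 𝕂 (fun k => Fin (n k) → 𝕂) 𝕂)
    (hA : ∀ j : ∀ k, Fin (n k), 1 ≤ ‖A fun k => Pi.single (j k) 1‖) (k₀ : Fin (d + 1)) :
    ∃ y : ∀ k, Fin (n k) → 𝕂, (∀ k i, ‖y k i‖ = 1) ∧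
      √(n k₀) * ∏ k, √(n k) ≤ 2 ^ d * ‖A y‖ := by
  obtain ⟨y, norm_y, littlewood⟩ := exists_unimodular_mixed_littlewood A k₀
  refine ⟨y, norm_y, le_trans ?_ littlewood⟩
  calc √(n k₀) * ∏ k, √(n k) = n k₀ * ∏ k, √(n (k₀.succAbove k)) := by
        rw [Fin.prod_univ_succAbove _ k₀, ← mul_assoc, Real.mul_self_sqrt (by positivity)]
    _ = ∑ _i : Fin (n k₀), √(∑ _j : ∀ k, Fin (n (k₀.succAbove k)), 1 ^ 2) := by
        simp [Real.sqrt_prod]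
    _ ≤ ∑ i, √(∑ j : ∀ k, Fin (n (k₀.succAbove k)),
          ‖A fun k => Pi.single ((k₀.insertNth i j : ∀ k, Fin (n k)) k) 1‖ ^ 2) := by
        gcongr
        exact hA _

lemma sqrt_mul_prod_rpow_le_two_pow_mul_opNorm (hp : ∀ k, 1 ≤ p k) (hn : ∀ k, n k ≠ 0)
    (A : MultilinearMap 𝕂 (fun k => Fin (n k) → 𝕂) 𝕂)
    (hA : ∀ j : ∀ k, Fin (n k), 1 ≤ ‖A fun k => Pi.single (j k) 1‖) (k₀ : Fin (d + 1)) :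
    √(n k₀) * ∏ k, (n k : ℝ) ^ (1 / 2 - (1 / p k).toReal) ≤ 2 ^ d * opNorm p A := by
  obtain ⟨y, norm_y, le_norm_map⟩ := exists_unimodular_sqrt_mul_prod_sqrt_le A hA k₀
  have n_pos (k : Fin (d + 1)) : (0 : ℝ) < n k := Nat.cast_pos.2 (Nat.pos_of_ne_zero (hn k))
  have prod_pos : 0 < ∏ k, (n k : ℝ) ^ (1 / p k).toReal :=
    Finset.prod_pos fun k _ => Real.rpow_pos_of_pos (n_pos k) _
  have split_sqrt (k : Fin (d + 1)) :
      (n k : ℝ) ^ (1 / 2 - (1 / p k).toReal) * (n k : ℝ) ^ (1 / p k).toReal = √(n k) := by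
    rw [← Real.rpow_add (n_pos k), sub_add_cancel, Real.sqrt_eq_rpow]
  refine le_of_mul_le_mul_right ?_ prod_pos
  calc √(n k₀) * (∏ k, (n k : ℝ) ^ (1 / 2 - (1 / p k).toReal)) *
        ∏ k, (n k : ℝ) ^ (1 / p k).toReal
      = √(n k₀) * ∏ k, √(n k) := by
        rw [mul_assoc, ← Finset.prod_mul_distrib, Finset.prod_congr rfl fun k _ => split_sqrt k]
    _ ≤ 2 ^ d * ‖A y‖ := le_norm_map
    _ ≤ 2 ^ d * ((∏ k, (n k : ℝ) ^ (1 / p k).toReal) * opNorm p A) := by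
        gcongr
        exact norm_map_le_prod_rpow_mul_opNorm hp hn A norm_y
    _ = 2 ^ d * opNorm p A * ∏ k, (n k : ℝ) ^ (1 / p k).toReal := by ring

lemma sqrt_mul_prod_rpow_le_two_pow_mul_opNorm_of_le {N : Fin (d + 1) → ℕ} (hp : ∀ k, 1 ≤ p k)
    (hN : ∀ k, N k ≠ 0) (hNn : ∀ k, N k ≤ n k) (A : MultilinearMap 𝕂 (fun k => Fin (n k) → 𝕂) 𝕂)
    (hA : ∀ j : ∀ k, Fin (n k), 1 ≤ ‖A fun k => Pi.single (j k) 1‖) (k₀ : Fin (d + 1)) :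
    √(N k₀) * ∏ k, (N k : ℝ) ^ (1 / 2 - (1 / p k).toReal) ≤ 2 ^ d * opNorm p A := by
  set L : ∀ k, (Fin (N k) → 𝕂) →ₗ[𝕂] Fin (n k) → 𝕂 :=
    fun k => Function.ExtendByZero.linearMap 𝕂 (Fin.castLE (hNn k))
  have L_single (k : Fin (d + 1)) (i : Fin (N k)) :
      L k (Pi.single i 1) = Pi.single (Fin.castLE (hNn k) i) 1 :=
    extend_single (Fin.castLE_injective (hNn k)) i 1
  have hB (j : ∀ k, Fin (N k)) : 1 ≤ ‖A.compLinearMap L fun k => Pi.single (j k) 1‖ := by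
    simpa only [MultilinearMap.compLinearMap_apply, L_single] using hA _
  have contraction (k : Fin (d + 1)) (x : Fin (N k) → 𝕂) :
      lpNorm (p k) (L k x) ≤ lpNorm (p k) x :=
    lpNorm_extend_le (zero_lt_one.trans_le (hp k)).ne' (Fin.castLE_injective (hNn k)) x
  refine (sqrt_mul_prod_rpow_le_two_pow_mul_opNorm hp hN _ hB k₀).trans ?_
  gcongr
  exact opNorm_compLinearMap_le hp A L contraction

lemma toReal_one_div_max_two_conjExp {p : ℝ≥0∞} (hp : 1 ≤ p) :
    (1 / max 2 (conjExp p)).toReal = 1 / 2 + min (1 / 2 - (1 / p).toReal) 0 := by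
  have one_div_le_one : 1 / p ≤ 1 := by simpa using hp
  calc (1 / max 2 (conjExp p)).toReal = (min 2⁻¹ (1 - 1 / p)).toReal := by
        rw [one_div, ENNReal.inv_strictAnti.antitone.map_max, conjExp, inv_inv]
    _ = min (1 / 2) (1 - (1 / p).toReal) := by
        rw [ENNReal.toReal_min (by simp) (by simp), ENNReal.toReal_inv, ENNReal.toReal_ofNat,
          ENNReal.toReal_sub_of_le one_div_le_one (by simp), ENNReal.toReal_one, one_div (2 : ℝ)]
    _ = 1 / 2 + min (1 / 2 - (1 / p).toReal) 0 := by
        rw [← min_add_add_left, min_comm]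
        congr 1 <;> ring

lemma exists_le_rpow_eq_rpow_max_zero {n : ℕ} (hn : n ≠ 0) (a : ℝ) :
    ∃ N ≠ 0, N ≤ n ∧ (N : ℝ) ^ a = (n : ℝ) ^ max a 0 := by
  rcases le_total a 0 with a_nonpos | a_nonneg
  · exact ⟨1, one_ne_zero, Nat.one_le_iff_ne_zero.2 hn, by simp [a_nonpos]⟩
  · exact ⟨n, hn, le_rfl, by rw [max_eq_left a_nonneg]⟩

theorem ksz_exponent_optimal_general (hp : ∀ k, 1 ≤ p k) (hn : ∀ k, n k ≠ 0)
    (A : MultilinearMap 𝕂 (fun k => Fin (n k) → 𝕂) 𝕂)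
    (hA : ∀ j : ∀ k, Fin (n k), 1 ≤ ‖A fun k => Pi.single (j k) 1‖) (k₀ : Fin (d + 1)) :
    (n k₀ : ℝ) ^ (1 / max 2 (conjExp (p k₀))).toReal *
        ∏ k, (n k : ℝ) ^ max ((1 : ℝ) / 2 - (1 / p k).toReal) 0 ≤
      2 ^ d * opNorm p A := by
  set a : Fin (d + 1) → ℝ := fun k => 1 / 2 - (1 / p k).toReal
  choose N N_ne_zero N_le N_rpow using fun k => exists_le_rpow_eq_rpow_max_zero (hn k) (a k)
  set N' : Fin (d + 1) → ℕ := Function.update N k₀ (n k₀)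
  have N'_k₀ : N' k₀ = n k₀ := Function.update_self ..
  have N'_succAbove (k : Fin d) : N' (k₀.succAbove k) = N (k₀.succAbove k) :=
    Function.update_of_ne (k₀.succAbove_ne k) ..
  have N'_ne_zero : ∀ k, N' k ≠ 0 :=
    (Function.forall_update_iff N fun _ N => N ≠ 0).2 ⟨hn k₀, fun k _ => N_ne_zero k⟩
  have N'_le : ∀ k, N' k ≤ n k :=
    (Function.forall_update_iff N fun k N => N ≤ n k).2 ⟨le_rfl, fun k _ => N_le k⟩
  have n_pos : (0 : ℝ) < n k₀ := Nat.cast_pos.2 (Nat.pos_of_ne_zero (hn k₀))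
  calc (n k₀ : ℝ) ^ (1 / max 2 (conjExp (p k₀))).toReal * ∏ k, (n k : ℝ) ^ max (a k) 0
      = √(n k₀) * ((n k₀ : ℝ) ^ a k₀ *
          ∏ k, (n (k₀.succAbove k) : ℝ) ^ max (a (k₀.succAbove k)) 0) := by
        rw [toReal_one_div_max_two_conjExp (hp k₀), Fin.prod_univ_succAbove _ k₀, ← mul_assoc,
          ← mul_assoc, Real.sqrt_eq_rpow, ← Real.rpow_add n_pos, ← Real.rpow_add n_pos, add_assoc,
          min_add_max, add_zero]
    _ = √(N' k₀) * ∏ k, (N' k : ℝ) ^ a k := by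
        simp only [Fin.prod_univ_succAbove _ k₀, N'_k₀, N'_succAbove, N_rpow]
    _ ≤ 2 ^ d * opNorm p A :=
        sqrt_mul_prod_rpow_le_two_pow_mul_opNorm_of_le hp N'_ne_zero N'_le A hA k₀

end LowerBound

/-- **Optimality of the exponent in the Kahane–Salem–Zygmund inequality (Theorem 1).**
For each `m` there is `D_m > 0` such that for all `n ≥ 1`, all `p_1, …, p_m ∈ [1,∞]` and
every unimodular `m`-linear form `A : ℓ_{p_1}^n × ⋯ × ℓ_{p_m}^n → 𝕂` one has
`‖A‖ ≥ D_m · n ^ (1/ρ + ∑ k max (1/2 − 1/p_k) 0)`, with `ρ = min_k max 2 (p_k)*`. -/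
theorem ksz_exponent_optimal {𝕂 : Type*} [RCLike 𝕂] (m : ℕ) (hm : 0 < m) :
    ∃ D : ℝ, 0 < D ∧
      ∀ n : ℕ, 1 ≤ n → ∀ p : Fin m → ℝ≥0∞, (∀ k, 1 ≤ p k) →
        ∀ A : MultilinearMap 𝕂 (fun _ : Fin m => Fin n → 𝕂) 𝕂,
          Unimodular (n := fun _ => n) A →
            D * (n : ℝ) ^
                ((1 / ⨅ k, max 2 (conjExp (p k))).toReal
                  + ∑ k, max ((1 : ℝ) / 2 - (1 / p k).toReal) 0) ≤
              opNorm p A := by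
  obtain ⟨d, rfl⟩ := Nat.exists_eq_add_one_of_ne_zero hm.ne'
  refine ⟨(2 ^ d)⁻¹, by positivity, fun n hn p hp A hA => ?_⟩
  obtain ⟨k₀, hk₀⟩ := exists_eq_ciInf_of_finite (f := fun k => max 2 (conjExp (p k)))
  have n_pos : (0 : ℝ) < n := Nat.cast_pos.2 hn
  rw [← hk₀, inv_mul_le_iff₀ (by positivity), Real.rpow_add n_pos, Real.rpow_sum_of_pos n_pos]
  exact ksz_exponent_optimal_general hp (fun _ => Nat.one_le_iff_ne_zero.1 hn) A
    (fun j => (hA j).ge) k₀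
end
end

section
/- Let m, n_1, ..., n_m be positive integers and p_1, ..., p_m ∈ [1, ∞]. There exists a constant C > 0 depending only on m such that there is a choice of signs ε_{j_1,...,j_m} ∈ {−1, 1} for which the m-linear form A : ℓ_{p_1}^{n_1} × ⋯ × ℓ_{p_m}^{n_m} → 𝕂 defined by A(z^{(1)}, ..., z^{(m)}) = Σ_{j_1=1}^{n_1} ⋯ Σ_{j_m=1}^{n_m} ε_{j_1,...,j_m} z_{j_1}^{(1)} ⋯ z_{j_m}^{(m)} satisfies ‖A‖ ≤ C · (Σ_{k=1}^m n_k)^{1/ρ} · Π_{k=1}^m n_k^{max{1/2 − 1/p_k, 0}}, where ρ := min_{1≤k≤m} max{2, p_k*} and p_k* is the conjugate exponent of p_k. -/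
open scoped BigOperators ENNReal

noncomputable section

/-!
For a fixed point the random sum `A(x)` is subgaussian, so comparing exponential moments over a
finite family of points yields signs which are good at all of them simultaneously. The relevant
points are lattice points: `|A|` is convex in each real coordinate, hence rounding coordinates to a
suitable neighbouring integer does not decrease it, and after dilating the Euclidean ball of the
`k`-th factor by `√n_k` only `exp (O(∑ n_k))` integer points are needed. This gives
`‖A‖ ≤ C (∑ n_k)^{1/2}` on the product of the real Hilbert spaces `ℓ_2^{n_k}`, and on the complex
ones after splitting every vector into real and imaginary parts.

Riesz–Thorin interpolation with the bound `‖A‖ ≤ 1` on `ℓ_1^{n_1} × ⋯ × ℓ_1^{n_m}` yields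
`‖A‖ ≤ C (∑ n_k)^{1/ρ}` on the product of the spaces `ℓ_{ρ*}^{n_k}`. Comparing the `ℓ_{ρ*}` and
`ℓ_{p_k}` norms costs `n_k ^ max (1/ρ* - 1/p_k) 0`, which is at most `n_k ^ max (1/2 - 1/p_k) 0` by
the choice of `ρ`.
-/

section RandomSigns

variable {J T : Type*} [Fintype J]

theorem sum_signs_exp_sum_mul_le [DecidableEq J] (a : J → ℝ) :
    ∑ ε : J → ℤˣ, Real.exp (∑ j, ((ε j : ℤ) : ℝ) * a j) ≤
      2 ^ Fintype.card J * Real.exp ((∑ j, a j ^ 2) / 2) :=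
  calc ∑ ε : J → ℤˣ, Real.exp (∑ j, ((ε j : ℤ) : ℝ) * a j)
      = ∏ j, ∑ s : ℤˣ, Real.exp (((s : ℤ) : ℝ) * a j) := by
        simp_rw [Fintype.prod_sum, Real.exp_sum]
    _ = ∏ j, 2 * Real.cosh (a j) := by
        simp [UnitsInt.univ, Real.cosh_eq, mul_div_cancel₀]
    _ ≤ ∏ j, 2 * Real.exp (a j ^ 2 / 2) := by
        gcongr with j
        exact Real.cosh_le_exp_half_sq (a j)
    _ = 2 ^ Fintype.card J * Real.exp ((∑ j, a j ^ 2) / 2) := by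
        simp [Finset.prod_mul_distrib, ← Real.exp_sum, Finset.sum_div]

theorem sum_signs_exp_abs_sum_mul_le [DecidableEq J] (a : J → ℝ) :
    ∑ ε : J → ℤˣ, Real.exp |∑ j, ((ε j : ℤ) : ℝ) * a j| ≤
      2 ^ Fintype.card J * (2 * Real.exp ((∑ j, a j ^ 2) / 2)) :=
  calc ∑ ε : J → ℤˣ, Real.exp |∑ j, ((ε j : ℤ) : ℝ) * a j|
      ≤ ∑ ε : J → ℤˣ, (Real.exp (∑ j, ((ε j : ℤ) : ℝ) * a j) +
          Real.exp (∑ j, ((ε j : ℤ) : ℝ) * -a j)) := by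
        simp_rw [mul_neg, Finset.sum_neg_distrib]
        gcongr
        exact Real.exp_abs_le _
    _ ≤ 2 ^ Fintype.card J * Real.exp ((∑ j, a j ^ 2) / 2) +
          2 ^ Fintype.card J * Real.exp ((∑ j, (-a j) ^ 2) / 2) := by
        rw [Finset.sum_add_distrib]
        exact add_le_add (sum_signs_exp_sum_mul_le a) (sum_signs_exp_sum_mul_le fun j => -a j)
    _ = 2 ^ Fintype.card J * (2 * Real.exp ((∑ j, a j ^ 2) / 2)) := by
        simp_rw [neg_sq]
        ring

theorem exists_signs_forall_exp_abs_sum_mul_le (Z : Finset T) (a : T → J → ℝ) {v : ℝ}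
    (ha : ∀ t ∈ Z, ∑ j, a t j ^ 2 ≤ v) :
    ∃ ε : J → ℤˣ, ∀ t ∈ Z,
      Real.exp |∑ j, ((ε j : ℤ) : ℝ) * a t j| ≤ 2 * Z.card * Real.exp (v / 2) := by
  classical
  have total : ∑ ε : J → ℤˣ, ∑ t ∈ Z, Real.exp |∑ j, ((ε j : ℤ) : ℝ) * a t j| ≤
      ∑ _ε : J → ℤˣ, 2 * Z.card * Real.exp (v / 2) :=
    calc ∑ ε : J → ℤˣ, ∑ t ∈ Z, Real.exp |∑ j, ((ε j : ℤ) : ℝ) * a t j|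
        = ∑ t ∈ Z, ∑ ε : J → ℤˣ, Real.exp |∑ j, ((ε j : ℤ) : ℝ) * a t j| := Finset.sum_comm
      _ ≤ ∑ t ∈ Z, 2 ^ Fintype.card J * (2 * Real.exp (v / 2)) := by
          refine Finset.sum_le_sum fun t ht => (sum_signs_exp_abs_sum_mul_le (a t)).trans ?_
          gcongr
          exact ha t ht
      _ = ∑ _ε : J → ℤˣ, 2 * Z.card * Real.exp (v / 2) := by
          simp only [Finset.sum_const, Finset.card_univ, Fintype.card_fun, Fintype.card_units_int,
            nsmul_eq_mul, Nat.cast_pow, Nat.cast_ofNat]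
          ring
  obtain ⟨ε, -, hε⟩ := Finset.exists_le_of_sum_le Finset.univ_nonempty total
  exact ⟨ε, fun t ht => (Finset.single_le_sum
    (f := fun t => Real.exp |∑ j, ((ε j : ℤ) : ℝ) * a t j|)
    (fun t _ => (Real.exp_pos _).le) ht).trans hε⟩

theorem exists_signs_forall_abs_sum_mul_le (Z : Finset T) (a : T → J → ℝ) {σ : ℝ} (hσ : 0 < σ)
    (ha : ∀ t ∈ Z, ∑ j, a t j ^ 2 ≤ σ ^ 2) :
    ∃ ε : J → ℤˣ, ∀ t ∈ Z,
      |∑ j, ((ε j : ℤ) : ℝ) * a t j| ≤ σ * √(2 * Real.log (2 * Z.card)) := by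
  obtain rfl | hZ := Z.eq_empty_or_nonempty
  · simp
  have card_pos : (1 : ℝ) ≤ Z.card := by exact_mod_cast hZ.card_pos
  set H := Real.log (2 * Z.card) with hH
  have H_pos : 0 < H := Real.log_pos (by linarith)
  set s := √(2 * H)
  have s_pos : 0 < s := by positivity
  have s_sq : s ^ 2 = 2 * H := Real.sq_sqrt (by positivity)
  obtain ⟨ε, hε⟩ := exists_signs_forall_exp_abs_sum_mul_le Z (fun t j => s / σ * a t j)
    (v := 2 * H) fun t ht => by
      simp_rw [mul_pow, ← Finset.mul_sum]
      calc (s / σ) ^ 2 * ∑ j, a t j ^ 2 ≤ (s / σ) ^ 2 * σ ^ 2 := by gcongr; exact ha t ht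
        _ = 2 * H := by rw [← s_sq]; field_simp
  refine ⟨ε, fun t ht => ?_⟩
  have scaled : s / σ * |∑ j, ((ε j : ℤ) : ℝ) * a t j| ≤ s / σ * (σ * s) := by
    have exp_le := hε t ht
    simp_rw [mul_left_comm _ (s / σ), ← Finset.mul_sum, abs_mul, abs_of_pos (div_pos s_pos hσ)]
      at exp_le
    rw [← Real.exp_le_exp]
    calc _ ≤ 2 * Z.card * Real.exp (2 * H / 2) := exp_le
      _ = Real.exp (H + H) := by
          rw [mul_div_cancel_left₀ _ two_ne_zero, Real.exp_add, hH, Real.exp_log (by positivity)]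
      _ = Real.exp (s / σ * (σ * s)) := by
          rw [← two_mul, ← s_sq]
          congr 1
          field_simp
  exact le_of_mul_le_mul_left scaled (by positivity)

end RandomSigns

section LatticePoints

theorem sum_exp_neg_sq_le_exp_one (S : Finset ℤ) :
    ∑ z ∈ S, Real.exp (-(z : ℝ) ^ 2) ≤ Real.exp 1 := by
  set x := Real.exp (-1)
  have x_pos : 0 < x := Real.exp_pos _
  have x_lt : x < 0.4 := Real.exp_neg_one_lt_d9.trans (by norm_num)
  have geom : HasSum (fun k : ℕ => x ^ k) (1 - x)⁻¹ :=
    hasSum_geometric_of_lt_one x_pos.le (by linarith)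
  have geom_int : HasSum (fun z : ℤ => x ^ z.natAbs) ((1 - x)⁻¹ + (1 - x)⁻¹ * x) := by
    refine HasSum.of_nat_of_neg_add_one (by simpa using geom) ?_
    have natAbs_neg_succ (k : ℕ) : (-((k : ℤ) + 1)).natAbs = k + 1 := by omega
    simpa only [natAbs_neg_succ, pow_succ] using geom.mul_right x
  calc ∑ z ∈ S, Real.exp (-(z : ℝ) ^ 2) ≤ ∑ z ∈ S, x ^ z.natAbs := by
        gcongr with z
        rw [← Real.exp_nat_mul, mul_neg_one]
        gcongr
        rw [Nat.cast_natAbs]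
        exact_mod_cast (Int.le_self_sq |z|).trans_eq (sq_abs z)
    _ ≤ (1 - x)⁻¹ + (1 - x)⁻¹ * x := sum_le_hasSum S (fun z _ => by positivity) geom_int
    _ ≤ x⁻¹ := by
        have : 0 < 1 - x := by linarith
        field_simp
        nlinarith
    _ = Real.exp 1 := by rw [← Real.exp_neg, neg_neg]

variable {ι : Type*} [Fintype ι]

theorem finite_setOf_sum_sq_le (R : ℝ) : {z : ι → ℤ | ∑ i, (z i : ℝ) ^ 2 ≤ R}.Finite := by
  classical
  refine (Set.finite_Icc (fun _ : ι => -⌊R⌋) fun _ => ⌊R⌋).subset fun z hz => ?_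
  have abs_le_floor (i : ι) : |z i| ≤ ⌊R⌋ := by
    have sq_le : (z i : ℝ) ^ 2 ≤ R :=
      (Finset.single_le_sum (f := fun i => (z i : ℝ) ^ 2) (fun i _ => sq_nonneg _)
        (Finset.mem_univ i)).trans hz
    have abs_le_sq : |z i| ≤ z i ^ 2 := (Int.le_self_sq |z i|).trans_eq (sq_abs _)
    exact abs_le_sq.trans (Int.le_floor.2 (by exact_mod_cast sq_le))
  exact ⟨fun i => (abs_le.1 (abs_le_floor i)).1, fun i => (abs_le.1 (abs_le_floor i)).2⟩

-- Weighting each lattice point by `exp (R - ∑ i, z i ^ 2) ≥ 1` makes the count factorize.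
theorem card_le_exp_of_forall_sum_sq_le {R : ℝ} (Z : Finset (ι → ℤ))
    (hZ : ∀ z ∈ Z, ∑ i, (z i : ℝ) ^ 2 ≤ R) :
    (Z.card : ℝ) ≤ Real.exp (R + Fintype.card ι) := by
  classical
  let coords (i : ι) : Finset ℤ := Z.image fun z => z i
  calc (Z.card : ℝ) = ∑ _z ∈ Z, (1 : ℝ) := by simp
    _ ≤ ∑ z ∈ Z, Real.exp R * ∏ i, Real.exp (-(z i : ℝ) ^ 2) := by
        refine Finset.sum_le_sum fun z hz => ?_
        rw [← Real.exp_sum, ← Real.exp_add, Finset.sum_neg_distrib]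
        exact Real.one_le_exp (by linarith [hZ z hz])
    _ ≤ ∑ z ∈ Fintype.piFinset coords, Real.exp R * ∏ i, Real.exp (-(z i : ℝ) ^ 2) :=
        Finset.sum_le_sum_of_subset_of_nonneg
          (fun z hz => Fintype.mem_piFinset.2 fun i => Finset.mem_image_of_mem _ hz)
          fun z _ _ => by positivity
    _ = Real.exp R * ∏ i, ∑ z ∈ coords i, Real.exp (-(z : ℝ) ^ 2) := by
        rw [← Finset.mul_sum, Finset.prod_univ_sum]
    _ ≤ Real.exp R * ∏ _i : ι, Real.exp 1 := by
        gcongr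
        exact sum_exp_neg_sq_le_exp_one _
    _ = Real.exp (R + Fintype.card ι) := by
        rw [Finset.prod_const, Finset.card_univ, Real.exp_add, ← Real.exp_nat_mul, mul_one]

end LatticePoints

section Rounding

theorem exists_int_abs_sub_le_one_and_le {g : ℝ → ℝ} (hg : ConvexOn ℝ Set.univ g) (t : ℝ) :
    ∃ z : ℤ, |(z : ℝ) - t| ≤ 1 ∧ g t ≤ g z := by
  have floor_near : |(⌊t⌋ : ℝ) - t| ≤ 1 := by
    rw [abs_le]
    constructor <;> linarith [Int.floor_le t, Int.lt_floor_add_one t]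
  have ceil_near : |(⌈t⌉ : ℝ) - t| ≤ 1 := by
    rw [abs_le]
    constructor <;> linarith [Int.le_ceil t, Int.ceil_lt_add_one t]
  have le_max : g t ≤ max (g ⌊t⌋) (g ⌈t⌉) :=
    hg.le_max_of_mem_Icc (Set.mem_univ _) (Set.mem_univ _) ⟨Int.floor_le t, Int.le_ceil t⟩
  obtain h | h := le_max_iff.1 le_max
  · exact ⟨⌊t⌋, floor_near, h⟩
  · exact ⟨⌈t⌉, ceil_near, h⟩

theorem exists_forall_int_abs_sub_le_one_and_le {ι : Type*} [Finite ι] [DecidableEq ι]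
    {f : (ι → ℝ) → ℝ}
    (hf : ∀ x i, ConvexOn ℝ Set.univ fun t => f (Function.update x i t)) (x : ι → ℝ) :
    ∃ z : ι → ℤ, (∀ i, |(z i : ℝ) - x i| ≤ 1) ∧ f x ≤ f fun i => z i := by
  have := Fintype.ofFinite ι
  suffices ∀ S : Finset ι, ∃ z : ι → ℤ, (∀ i, |(z i : ℝ) - x i| ≤ 1) ∧
      f x ≤ f (S.piecewise (fun i => (z i : ℝ)) x) by
    simpa using this Finset.univ
  intro S
  induction S using Finset.induction_on with
  | empty =>
    choose z z_near _ using fun i =>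
      exists_int_abs_sub_le_one_and_le (convexOn_id convex_univ) (x i)
    exact ⟨z, z_near, by simp⟩
  | insert i S hi ih =>
    obtain ⟨z, z_near, le_z⟩ := ih
    set y := S.piecewise (fun i => (z i : ℝ)) x
    obtain ⟨w, w_near, le_w⟩ := exists_int_abs_sub_le_one_and_le (hf y i) (x i)
    refine ⟨Function.update z i w, fun j => ?_, ?_⟩
    · obtain rfl | hj := eq_or_ne j i
      · simpa using w_near
      · simpa [hj] using z_near j
    · have y_eq : Function.update y i (x i) = y := by
        simp [y, hi]
      have piecewise_eq : (insert i S).piecewise (fun j => (Function.update z i w j : ℝ)) x =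
          Function.update y i w := by
        ext j
        obtain rfl | hj := eq_or_ne j i
        · simp
        · simp [y, hj, Finset.piecewise]
      rw [piecewise_eq]
      exact le_z.trans ((congrArg f y_eq).ge.trans le_w)

end Rounding

section SignForms

variable {m : ℕ} {n : Fin m → ℕ}

theorem coeffForm_apply {𝕂 : Type*} [RCLike 𝕂] (c : (∀ k, Fin (n k)) → 𝕂)
    (x : ∀ k, Fin (n k) → 𝕂) : coeffForm c x = ∑ j, c j * ∏ k, x k (j k) := by
  simp [coeffForm, mul_comm]

theorem map_coeffForm {𝕂 𝕃 : Type*} [RCLike 𝕂] [RCLike 𝕃] (φ : 𝕂 →+* 𝕃)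
    (c : (∀ k, Fin (n k)) → 𝕂) (x : ∀ k, Fin (n k) → 𝕂) :
    φ (coeffForm c x) = coeffForm (fun j => φ (c j)) fun k i => φ (x k i) := by
  simp [coeffForm_apply]

/-- The `m`-linear form over `𝕂` whose coefficients are the signs `ε`. Taking the signs in `ℤˣ`
makes one choice of signs available over every field. -/
def signForm (𝕂 : Type*) [RCLike 𝕂] (ε : (∀ k, Fin (n k)) → ℤˣ) :
    MultilinearMap 𝕂 (fun k => Fin (n k) → 𝕂) 𝕂 :=
  coeffForm fun j => ((ε j : ℤ) : 𝕂)

theorem map_signForm {𝕂 𝕃 : Type*} [RCLike 𝕂] [RCLike 𝕃] (φ : 𝕂 →+* 𝕃)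
    (ε : (∀ k, Fin (n k)) → ℤˣ) (x : ∀ k, Fin (n k) → 𝕂) :
    φ (signForm 𝕂 ε x) = signForm 𝕃 ε fun k i => φ (x k i) := by
  simp [signForm, map_coeffForm]

theorem norm_signForm_le_prod_sum_norm {𝕂 : Type*} [RCLike 𝕂] (ε : (∀ k, Fin (n k)) → ℤˣ)
    (x : ∀ k, Fin (n k) → 𝕂) : ‖signForm 𝕂 ε x‖ ≤ ∏ k, ∑ i, ‖x k i‖ := by
  have norm_sign (j : ∀ k, Fin (n k)) : ‖((ε j : ℤ) : 𝕂)‖ = 1 := by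
    obtain h | h := Int.units_eq_one_or (ε j) <;> simp [h]
  rw [signForm, coeffForm_apply, Fintype.prod_sum]
  refine norm_sum_le_of_le _ fun j _ => ?_
  rw [norm_mul, norm_sign, one_mul, norm_prod]

end SignForms

section Discretization

variable {m : ℕ} {n : Fin m → ℕ}

/-- The integer points whose `k`-th block lies in the Euclidean ball of radius `2 * √(n k)`. They
discretize the product of the Euclidean balls of radii `√(n k)`: moving every coordinate by at
most `1` changes the `k`-th block by at most `√(n k)`. -/
def latticeBlocks (n : Fin m → ℕ) : Set ((Σ k, Fin (n k)) → ℤ) :=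
  {z | ∀ k, ∑ i, (z ⟨k, i⟩ : ℝ) ^ 2 ≤ 4 * n k}

theorem sum_sq_le_of_mem_latticeBlocks {z : (Σ k, Fin (n k)) → ℤ} (hz : z ∈ latticeBlocks n) :
    ∑ i, (z i : ℝ) ^ 2 ≤ 4 * ∑ k, (n k : ℝ) := by
  rw [Fintype.sum_sigma, Finset.mul_sum]
  exact Finset.sum_le_sum fun k _ => hz k

theorem finite_latticeBlocks (n : Fin m → ℕ) : (latticeBlocks n).Finite :=
  (finite_setOf_sum_sq_le _).subset fun _ => sum_sq_le_of_mem_latticeBlocks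

theorem card_toFinset_latticeBlocks_le (n : Fin m → ℕ) :
    ((finite_latticeBlocks n).toFinset.card : ℝ) ≤ Real.exp (5 * ∑ k, (n k : ℝ)) := by
  refine (card_le_exp_of_forall_sum_sq_le _ fun z hz =>
    sum_sq_le_of_mem_latticeBlocks ((finite_latticeBlocks n).mem_toFinset.1 hz)).trans_eq ?_
  simp only [Fintype.card_sigma, Fintype.card_fin, Nat.cast_sum]
  ring_nf

theorem convexOn_abs_apply_curry_update (A : MultilinearMap ℝ (fun k => Fin (n k) → ℝ) ℝ)
    (x : (Σ k, Fin (n k)) → ℝ) (i : Σ k, Fin (n k)) :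
    ConvexOn ℝ Set.univ fun t => |A (Sigma.curry (Function.update x i t))| := by
  obtain ⟨k, i⟩ := i
  let y : ∀ k, Fin (n k) → ℝ := Sigma.curry x
  let line : ℝ →ᵃ[ℝ] (Fin (n k) → ℝ) :=
    AffineMap.lineMap (Function.update (y k) i 0) (Function.update (y k) i 1)
  have line_apply (t : ℝ) : line t = Function.update (y k) i t := by
    ext l
    obtain rfl | hl := eq_or_ne l i <;> simp [line, AffineMap.lineMap_apply, *]
  have affine (t : ℝ) : A (Sigma.curry (Function.update x ⟨k, i⟩ t)) =
      (A.toLinearMap y k).toAffineMap.comp line t := by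
    rw [Sigma.curry_update, AffineMap.comp_apply, line_apply]
    rfl
  simp_rw [affine]
  exact (convexOn_univ_norm (E := ℝ)).comp_affineMap _

theorem exists_mem_latticeBlocks_prod_sqrt_mul_abs_le
    (A : MultilinearMap ℝ (fun k => Fin (n k) → ℝ) ℝ) (x : ∀ k, Fin (n k) → ℝ)
    (hx : ∀ k, ∑ i, x k i ^ 2 ≤ 1) :
    ∃ z ∈ latticeBlocks n, (∏ k, √(n k)) * |A x| ≤ |A fun k i => z ⟨k, i⟩| := by
  obtain ⟨z, z_near, le_z⟩ := exists_forall_int_abs_sub_le_one_and_le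
    (f := fun y => |A (Sigma.curry y)|)
    (convexOn_abs_apply_curry_update A) fun i : Σ k, Fin (n k) => √(n i.1) * x i.1 i.2
  refine ⟨z, fun k => ?_, ?_⟩
  · calc ∑ i : Fin (n k), (z ⟨k, i⟩ : ℝ) ^ 2
        ≤ ∑ i : Fin (n k), (2 * (√(n k) * x k i) ^ 2 + 2) := by
          refine Finset.sum_le_sum fun i _ => ?_
          have sq_near : ((z ⟨k, i⟩ : ℝ) - √(n k) * x k i) ^ 2 ≤ 1 :=
            (sq_le_one_iff_abs_le_one _).2 (z_near ⟨k, i⟩)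
          nlinarith [sq_nonneg ((z ⟨k, i⟩ : ℝ) - 2 * (√(n k) * x k i))]
      _ = 2 * n k * ∑ i, x k i ^ 2 + n k * 2 := by
          simp [Finset.sum_add_distrib, mul_pow, Finset.mul_sum, mul_assoc]
      _ ≤ 2 * n k * 1 + n k * 2 := by gcongr; exact hx k
      _ = 4 * n k := by ring
  · have scale : A (Sigma.curry fun i : Σ k, Fin (n k) => √(n i.1) * x i.1 i.2) =
        (∏ k, √(n k)) * A x :=
      A.map_smul_univ (fun k => √(n k)) x
    rwa [scale, abs_mul, abs_of_nonneg (by positivity)] at le_z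

theorem sum_prod_sq_le_of_mem_latticeBlocks {z : (Σ k, Fin (n k)) → ℤ}
    (hz : z ∈ latticeBlocks n) :
    ∑ j : ∀ k, Fin (n k), (∏ k, (z ⟨k, j k⟩ : ℝ)) ^ 2 ≤ (2 ^ m * ∏ k, √(n k)) ^ 2 :=
  calc ∑ j : ∀ k, Fin (n k), (∏ k, (z ⟨k, j k⟩ : ℝ)) ^ 2
      = ∏ k, ∑ i, (z ⟨k, i⟩ : ℝ) ^ 2 := by
        simp_rw [← Finset.prod_pow, Fintype.prod_sum]
    _ ≤ ∏ k, 4 * (n k : ℝ) :=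
        Finset.prod_le_prod (fun k _ => by positivity) fun k _ => hz k
    _ = (2 ^ m * ∏ k, √(n k)) ^ 2 := by
        simp only [mul_pow, Finset.prod_mul_distrib, ← Finset.prod_pow, Real.sq_sqrt,
          Nat.cast_nonneg, Finset.prod_const, Finset.card_univ, Fintype.card_fin,
          pow_right_comm _ m]
        norm_num

theorem exists_signs_forall_mem_latticeBlocks_abs_signForm_le (hm : 0 < m) (hn : ∀ k, 0 < n k) :
    ∃ ε : (∀ k, Fin (n k)) → ℤˣ, ∀ z ∈ latticeBlocks n,
      |signForm ℝ ε fun k i => z ⟨k, i⟩| ≤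
        (∏ k, √(n k)) * (2 ^ (m + 2) * √(∑ k, (n k : ℝ))) := by
  set N := ∑ k, (n k : ℝ)
  have one_le_N : 1 ≤ N :=
    (Nat.one_le_cast.2 (hn ⟨0, hm⟩)).trans (Finset.single_le_sum (f := fun k => (n k : ℝ))
      (fun k _ => by positivity) (Finset.mem_univ _))
  have prod_pos : 0 < ∏ k, √(n k : ℝ) :=
    Finset.prod_pos fun k _ => Real.sqrt_pos.2 (Nat.cast_pos.2 (hn k))
  set Z := (finite_latticeBlocks n).toFinset
  obtain ⟨ε, hε⟩ := exists_signs_forall_abs_sum_mul_le Z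
    (fun z (j : ∀ k, Fin (n k)) => ∏ k, (z ⟨k, j k⟩ : ℝ)) (σ := 2 ^ m * ∏ k, √(n k : ℝ))
    (by positivity) fun z hz =>
      sum_prod_sq_le_of_mem_latticeBlocks ((finite_latticeBlocks n).mem_toFinset.1 hz)
  have Z_nonempty : 0 < Z.card :=
    Finset.card_pos.2 ⟨0, (finite_latticeBlocks n).mem_toFinset.2 fun k => by simp⟩
  have log_card_le : Real.log (2 * Z.card) ≤ 6 * N :=
    calc Real.log (2 * Z.card) = Real.log 2 + Real.log Z.card :=
          Real.log_mul two_ne_zero (by positivity)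
      _ ≤ N + 5 * N := by
          gcongr
          · linarith [Real.log_two_lt_d9]
          · exact (Real.log_le_iff_le_exp (by positivity)).2 (card_toFinset_latticeBlocks_le n)
      _ = 6 * N := by ring
  have sqrt_le : √(2 * Real.log (2 * Z.card)) ≤ 4 * √N :=
    calc √(2 * Real.log (2 * Z.card)) ≤ √(4 ^ 2 * N) := Real.sqrt_le_sqrt (by linarith)
      _ = 4 * √N := by simp
  refine ⟨ε, fun z hz => ?_⟩
  rw [signForm, coeffForm_apply]
  calc |∑ j, ((ε j : ℤ) : ℝ) * ∏ k, (z ⟨k, j k⟩ : ℝ)|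
      ≤ (2 ^ m * ∏ k, √(n k)) * √(2 * Real.log (2 * Z.card)) :=
        hε z ((finite_latticeBlocks n).mem_toFinset.2 hz)
    _ ≤ (2 ^ m * ∏ k, √(n k)) * (4 * √N) := by gcongr
    _ = (∏ k, √(n k)) * (2 ^ (m + 2) * √N) := by ring

theorem exists_signs_forall_abs_signForm_le (hm : 0 < m) (hn : ∀ k, 0 < n k) :
    ∃ ε : (∀ k, Fin (n k)) → ℤˣ, ∀ x : ∀ k, Fin (n k) → ℝ, (∀ k, ∑ i, x k i ^ 2 ≤ 1) →
      |signForm ℝ ε x| ≤ 2 ^ (m + 2) * √(∑ k, (n k : ℝ)) := by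
  obtain ⟨ε, hε⟩ := exists_signs_forall_mem_latticeBlocks_abs_signForm_le hm hn
  refine ⟨ε, fun x hx => ?_⟩
  obtain ⟨z, hz, le_z⟩ := exists_mem_latticeBlocks_prod_sqrt_mul_abs_le (signForm ℝ ε) x hx
  exact le_of_mul_le_mul_left (le_z.trans (hε z hz))
    (Finset.prod_pos fun k _ => Real.sqrt_pos.2 (Nat.cast_pos.2 (hn k)))

end Discretization

section Complexification

variable {m : ℕ} {n : Fin m → ℕ}

theorem norm_signForm_complex_le {ε : (∀ k, Fin (n k)) → ℤˣ} {D : ℝ}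
    (hD : ∀ x : ∀ k, Fin (n k) → ℝ, (∀ k, ∑ i, x k i ^ 2 ≤ 1) → |signForm ℝ ε x| ≤ D)
    {x : ∀ k, Fin (n k) → ℂ} (hx : ∀ k, ∑ i, ‖x k i‖ ^ 2 ≤ 1) :
    ‖signForm ℂ ε x‖ ≤ 2 ^ m * D := by
  let part (s : Finset (Fin m)) (k : Fin m) (i : Fin (n k)) : ℝ :=
    if k ∈ s then (x k i).re else (x k i).im
  have part_le (s : Finset (Fin m)) : |signForm ℝ ε (part s)| ≤ D := by
    refine hD _ fun k => (Finset.sum_le_sum fun i _ => ?_).trans (hx k)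
    simp only [part]
    split_ifs
    · exact sq_le_sq.2 (by simpa using Complex.abs_re_le_norm (x k i))
    · exact sq_le_sq.2 (by simpa using Complex.abs_im_le_norm (x k i))
  let phase (s : Finset (Fin m)) (k : Fin m) : ℂ := if k ∈ s then 1 else Complex.I
  have expand : signForm ℂ ε x =
      ∑ s : Finset (Fin m), (∏ k, phase s k) * (signForm ℝ ε (part s) : ℝ) := by
    have x_eq : x = (fun k i => ((x k i).re : ℂ)) + fun k i => Complex.I * (x k i).im := by
      ext k i
      simp [mul_comm Complex.I]
    rw [x_eq, MultilinearMap.map_add_univ]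
    refine Finset.sum_congr rfl fun s _ => ?_
    rw [← smul_eq_mul, ← Complex.ofRealHom_eq_coe, map_signForm, ← MultilinearMap.map_smul_univ]
    congr 1
    ext k i
    by_cases hk : k ∈ s <;> simp [hk, phase, part]
  rw [expand]
  calc ‖∑ s : Finset (Fin m), (∏ k, phase s k) * (signForm ℝ ε (part s) : ℂ)‖
      ≤ ∑ _s : Finset (Fin m), D := by
        refine norm_sum_le_of_le _ fun s _ => ?_
        have norm_phase (k : Fin m) : ‖phase s k‖ = 1 := by
          by_cases hk : k ∈ s <;> simp [hk, phase]
        simpa [norm_prod, norm_phase] using part_le s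
    _ = 2 ^ m * D := by simp

end Complexification

section Interpolation

/-- The power `x ↦ x ‖x‖ ^ (s - 1)`, which raises the modulus of `x` to the complex power `s` and
keeps its phase. It is entire in `s` also for `x = 0`, where its value is `0`. -/
def polarPow (x s : ℂ) : ℂ :=
  x / ‖x‖ * (‖x‖ : ℂ) ^ s

theorem polarPow_one (x : ℂ) : polarPow x 1 = x := by
  by_cases hx : x = 0 <;> simp [polarPow, hx]

theorem differentiable_polarPow (x : ℂ) : Differentiable ℂ (polarPow x) := by
  by_cases hx : x = 0
  · simp [funext fun s => (by simp [polarPow, hx] : polarPow x s = 0)]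
  · exact (differentiable_id.const_cpow (Or.inl (by simpa using hx))).const_mul _

theorem norm_polarPow (x : ℂ) {s : ℂ} (hs : 0 < s.re) : ‖polarPow x s‖ = ‖x‖ ^ s.re := by
  by_cases hx : x = 0
  · simp [polarPow, hx, Real.zero_rpow hs.ne']
  · have norm_pos : 0 < ‖x‖ := norm_pos_iff.2 hx
    rw [polarPow, norm_mul, norm_div, Complex.norm_real, norm_norm, div_self norm_pos.ne', one_mul,
      Complex.norm_cpow_eq_rpow_re_of_pos norm_pos]

theorem sum_norm_polarPow_rpow {κ : Type*} [Fintype κ] (x : κ → ℂ) {s : ℂ} (hs : 0 < s.re)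
    (p : ℝ) : ∑ i, ‖polarPow (x i) s‖ ^ p = ∑ i, ‖x i‖ ^ (s.re * p) := by
  simp_rw [norm_polarPow _ hs, ← Real.rpow_mul (norm_nonneg _)]

theorem one_sub_div_add_div_pos {p₀ p₁ t : ℝ} (hp₀ : 0 < p₀) (hp₁ : 0 < p₁)
    (ht : t ∈ Set.Icc 0 1) : 0 < (1 - t) / p₀ + t / p₁ := by
  obtain rfl | t_pos := ht.1.eq_or_lt
  · simpa using hp₀
  · exact add_pos_of_nonneg_of_pos (div_nonneg (sub_nonneg.2 ht.2) hp₀.le) (div_pos t_pos hp₁)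

/-- The affine function of `z` with value `q / p₀` at `0` and `q / p₁` at `1`. Raising a vector of
`ℓ_q` to this power moves it along the interpolation scale from `ℓ_{p₀}` to `ℓ_{p₁}`. -/
def interpExponent (p₀ p₁ q : ℝ) (z : ℂ) : ℂ :=
  q * ((1 - z) / p₀ + z / p₁)

theorem re_interpExponent (p₀ p₁ q : ℝ) (z : ℂ) :
    (interpExponent p₀ p₁ q z).re = q * ((1 - z.re) / p₀ + z.re / p₁) := by
  simp [interpExponent, Complex.div_ofReal_re]

theorem re_interpExponent_pos {p₀ p₁ q : ℝ} (hp₀ : 0 < p₀) (hp₁ : 0 < p₁) (hq : 0 < q) {z : ℂ}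
    (hz : z.re ∈ Set.Icc 0 1) : 0 < (interpExponent p₀ p₁ q z).re := by
  rw [re_interpExponent]
  exact mul_pos hq (one_sub_div_add_div_pos hp₀ hp₁ hz)

theorem interpExponent_eq_one {p₀ p₁ q θ : ℝ} (hq : q ≠ 0)
    (hθ : 1 / q = (1 - θ) / p₀ + θ / p₁) : interpExponent p₀ p₁ q θ = 1 := by
  have : q * ((1 - θ) / p₀ + θ / p₁) = 1 := by rw [← hθ, mul_one_div_cancel hq]
  simpa [interpExponent] using congrArg Complex.ofReal this

theorem differentiable_interpExponent (p₀ p₁ q : ℝ) :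
    Differentiable ℂ (interpExponent p₀ p₁ q) := by
  unfold interpExponent
  fun_prop

variable {m : ℕ} {n : Fin m → ℕ}

theorem norm_coeffForm_le_sum_norm {𝕂 : Type*} [RCLike 𝕂] (c : (∀ k, Fin (n k)) → 𝕂)
    {x : ∀ k, Fin (n k) → 𝕂} (hx : ∀ k i, ‖x k i‖ ≤ 1) : ‖coeffForm c x‖ ≤ ∑ j, ‖c j‖ := by
  rw [coeffForm_apply]
  refine norm_sum_le_of_le _ fun j _ => ?_
  rw [norm_mul, norm_prod]
  exact mul_le_of_le_one_right (norm_nonneg _)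
    (Finset.prod_le_one (fun k _ => norm_nonneg _) fun k _ => hx k (j k))

theorem le_one_of_sum_rpow_le_one {κ : Type*} [Fintype κ] {a : κ → ℝ} (ha : ∀ i, 0 ≤ a i)
    {p : ℝ} (hp : 0 < p) (hsum : ∑ i, a i ^ p ≤ 1) (i : κ) : a i ≤ 1 := by
  have term_le : a i ^ p ≤ 1 :=
    (Finset.single_le_sum (f := fun i => a i ^ p) (fun i _ => Real.rpow_nonneg (ha i) p)
      (Finset.mem_univ i)).trans hsum
  exact (Real.rpow_le_rpow_iff (ha i) zero_le_one hp).1 (by rwa [Real.one_rpow])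

-- Riesz–Thorin: apply the three lines theorem to `z ↦ coeffForm c (g z)`, where `g z` raises the
-- moduli of the coordinates of `x k` to the power `interpExponent (p₀ k) (p₁ k) (q k) z`.
theorem norm_coeffForm_le_rpow_mul_rpow (c : (∀ k, Fin (n k)) → ℂ) {p₀ p₁ q : Fin m → ℝ}
    (hp₀ : ∀ k, 0 < p₀ k) (hp₁ : ∀ k, 0 < p₁ k) {θ : ℝ} (hθ : θ ∈ Set.Icc 0 1)
    (hq : ∀ k, 1 / q k = (1 - θ) / p₀ k + θ / p₁ k) {a b : ℝ}
    (ha : ∀ x : ∀ k, Fin (n k) → ℂ, (∀ k, ∑ i, ‖x k i‖ ^ p₀ k ≤ 1) → ‖coeffForm c x‖ ≤ a)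
    (hb : ∀ x : ∀ k, Fin (n k) → ℂ, (∀ k, ∑ i, ‖x k i‖ ^ p₁ k ≤ 1) → ‖coeffForm c x‖ ≤ b)
    {x : ∀ k, Fin (n k) → ℂ} (hx : ∀ k, ∑ i, ‖x k i‖ ^ q k ≤ 1) :
    ‖coeffForm c x‖ ≤ a ^ (1 - θ) * b ^ θ := by
  have q_pos (k : Fin m) : 0 < q k :=
    one_div_pos.1 (hq k ▸ one_sub_div_add_div_pos (hp₀ k) (hp₁ k) hθ)
  let s (k : Fin m) (z : ℂ) : ℂ := interpExponent (p₀ k) (p₁ k) (q k) z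
  have s_re_pos {z : ℂ} (hz : z.re ∈ Set.Icc 0 1) (k : Fin m) : 0 < (s k z).re :=
    re_interpExponent_pos (hp₀ k) (hp₁ k) (q_pos k) hz
  have s_theta (k : Fin m) : s k θ = 1 := interpExponent_eq_one (q_pos k).ne' (hq k)
  let g (z : ℂ) (k : Fin m) (i : Fin (n k)) : ℂ := polarPow (x k i) (s k z)
  have hd : Differentiable ℂ fun z => coeffForm c (g z) := by
    have (k : Fin m) (i : Fin (n k)) : Differentiable ℂ fun z => g z k i :=
      (differentiable_polarPow _).comp (differentiable_interpExponent _ _ _)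
    simp_rw [coeffForm_apply]
    fun_prop
  have three_lines := Complex.HadamardThreeLines.norm_le_interp_of_mem_verticalClosedStrip₀₁'
    (fun z => coeffForm c (g z)) (z := θ) (a := a) (b := b) hθ hd.diffContOnCl ?bounded ?left ?right
  case bounded =>
    refine ⟨∑ j, ‖c j‖, ?_⟩
    rintro _ ⟨z, hz, rfl⟩
    refine norm_coeffForm_le_sum_norm c fun k i => ?_
    rw [norm_polarPow _ (s_re_pos hz k)]
    exact Real.rpow_le_one (norm_nonneg _)
      (le_one_of_sum_rpow_le_one (fun i => norm_nonneg _) (q_pos k) (hx k) i) (s_re_pos hz k).le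
  case left =>
    intro z hz
    have re_z : z.re = 0 := hz
    refine ha _ fun k => (sum_norm_polarPow_rpow _ (s_re_pos (by simp [re_z]) k) _).trans_le ?_
    simpa [s, re_interpExponent, re_z, (hp₀ k).ne'] using hx k
  case right =>
    intro z hz
    have re_z : z.re = 1 := hz
    refine hb _ fun k => (sum_norm_polarPow_rpow _ (s_re_pos (by simp [re_z]) k) _).trans_le ?_
    simpa [s, re_interpExponent, re_z, (hp₁ k).ne'] using hx k
  simpa [g, s_theta, polarPow_one] using three_lines

end Interpolation

section LpNorm

theorem sum_rpow_le_one_of_exponent_le {κ : Type*} [Fintype κ] {a : κ → ℝ} (ha : ∀ i, 0 ≤ a i)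
    {p q : ℝ} (hp : 0 < p) (hpq : p ≤ q) (hsum : ∑ i, a i ^ p ≤ 1) : ∑ i, a i ^ q ≤ 1 := by
  refine (Finset.sum_le_sum fun i _ => ?_).trans hsum
  exact Real.rpow_le_rpow_of_exponent_ge_of_imp (ha i) (le_one_of_sum_rpow_le_one ha hp hsum i) hpq
    fun _ q_eq_zero => absurd q_eq_zero (hp.trans_le hpq).ne'

theorem sum_rpow_le_card_rpow_of_exponent_le {κ : Type*} [Fintype κ] {a : κ → ℝ}
    (ha : ∀ i, 0 ≤ a i) {p q : ℝ} (hq : 0 < q) (hqp : q ≤ p) (hsum : ∑ i, a i ^ p ≤ 1) :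
    ∑ i, a i ^ q ≤ ((Fintype.card κ : ℝ) ^ (1 / q - 1 / p)) ^ q := by
  have hp : 0 < p := hq.trans_le hqp
  have power_mean : (∑ i, a i ^ q) ^ (p / q) ≤ (Fintype.card κ : ℝ) ^ (p / q - 1) :=
    calc (∑ i, a i ^ q) ^ (p / q)
        ≤ (Fintype.card κ : ℝ) ^ (p / q - 1) * ∑ i, (a i ^ q) ^ (p / q) :=
          Real.rpow_sum_le_const_mul_sum_rpow_of_nonneg Finset.univ ((one_le_div hq).2 hqp)
            fun i _ => Real.rpow_nonneg (ha i) q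
      _ = (Fintype.card κ : ℝ) ^ (p / q - 1) * ∑ i, a i ^ p := by
          simp_rw [← Real.rpow_mul (ha _), mul_div_cancel₀ p hq.ne']
      _ ≤ (Fintype.card κ : ℝ) ^ (p / q - 1) := mul_le_of_le_one_right (by positivity) hsum
  have sum_nonneg : 0 ≤ ∑ i, a i ^ q := Finset.sum_nonneg fun i _ => Real.rpow_nonneg (ha i) q
  rw [← Real.rpow_le_rpow_iff sum_nonneg (by positivity) (div_pos hp hq)]
  refine power_mean.trans_eq ?_
  rw [← Real.rpow_mul (by positivity), ← Real.rpow_mul (by positivity)]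
  congr 1
  field_simp

variable {𝕂 : Type*} [RCLike 𝕂]

theorem norm_le_one_of_lpNorm_top_le_one {n : ℕ} {x : Fin n → 𝕂} (hx : lpNorm ∞ x ≤ 1)
    (i : Fin n) : ‖x i‖ ≤ 1 := by
  rw [lpNorm, if_pos rfl] at hx
  exact (le_ciSup (Set.finite_range fun j => ‖x j‖).bddAbove i).trans hx

theorem sum_norm_rpow_toReal_le_one_of_lpNorm_le_one {p : ℝ≥0∞} (hp : 0 < p) (hp_top : p ≠ ∞)
    {n : ℕ} {x : Fin n → 𝕂} (hx : lpNorm p x ≤ 1) : ∑ i, ‖x i‖ ^ p.toReal ≤ 1 := by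
  rw [lpNorm, if_neg hp_top] at hx
  exact (Real.rpow_le_rpow_iff (by positivity) zero_le_one
    (one_div_pos.2 (ENNReal.toReal_pos hp.ne' hp_top))).1 (by rwa [Real.one_rpow])

theorem sum_norm_rpow_le_of_lpNorm_le_one {p : ℝ≥0∞} (hp : 0 < p) {q : ℝ} (hq : 0 < q) {n : ℕ}
    {x : Fin n → 𝕂} (hx : lpNorm p x ≤ 1) :
    ∑ i, ‖x i‖ ^ q ≤ ((n : ℝ) ^ max (1 / q - (1 / p).toReal) 0) ^ q := by
  obtain rfl | hp_top := eq_or_ne p ∞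
  · calc ∑ i, ‖x i‖ ^ q ≤ ∑ _i : Fin n, (1 : ℝ) := by
          gcongr with i
          exact Real.rpow_le_one (norm_nonneg _) (norm_le_one_of_lpNorm_top_le_one hx i) hq.le
      _ = ((n : ℝ) ^ max (1 / q - ((1 : ℝ≥0∞) / ∞).toReal) 0) ^ q := by
          simp [hq.le, ← Real.rpow_mul, hq.ne']
  · have hsum := sum_norm_rpow_toReal_le_one_of_lpNorm_le_one hp hp_top hx
    have p_pos : 0 < p.toReal := ENNReal.toReal_pos hp.ne' hp_top
    rw [ENNReal.toReal_div, ENNReal.toReal_one]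
    obtain hpq | hqp := le_total p.toReal q
    · rw [max_eq_right (sub_nonpos.2 (one_div_le_one_div_of_le p_pos hpq)), Real.rpow_zero,
        Real.one_rpow]
      exact sum_rpow_le_one_of_exponent_le (fun i => norm_nonneg _) p_pos hpq hsum
    · rw [max_eq_left (sub_nonneg.2 (one_div_le_one_div_of_le hq hqp))]
      simpa using sum_rpow_le_card_rpow_of_exponent_le (fun i => norm_nonneg (x i)) hq hqp hsum

theorem opNorm_le_mul_prod_rpow {m : ℕ} {n : Fin m → ℕ} (hn : ∀ k, 0 < n k) {p : Fin m → ℝ≥0∞}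
    (hp : ∀ k, 0 < p k) {q : ℝ} (hq : 0 < q) {A : MultilinearMap 𝕂 (fun k => Fin (n k) → 𝕂) 𝕂}
    {B : ℝ} (hA : ∀ x, (∀ k, ∑ i, ‖x k i‖ ^ q ≤ 1) → ‖A x‖ ≤ B) :
    opNorm p A ≤ B * ∏ k, (n k : ℝ) ^ max (1 / q - (1 / p k).toReal) 0 := by
  set c : Fin m → ℝ := fun k => (n k : ℝ) ^ max (1 / q - (1 / p k).toReal) 0
  have c_pos (k : Fin m) : 0 < c k := Real.rpow_pos_of_pos (Nat.cast_pos.2 (hn k)) _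
  have B_nonneg : 0 ≤ B :=
    (norm_nonneg _).trans (hA 0 fun k => by simp [Real.zero_rpow hq.ne'])
  refine Real.sSup_le ?_ (mul_nonneg B_nonneg (Finset.prod_nonneg fun k _ => (c_pos k).le))
  rintro _ ⟨x, hx, rfl⟩
  have rescale : x = fun k => (c k : 𝕂) • (((c k)⁻¹ : ℝ) : 𝕂) • x k := by
    ext k i
    simp [(c_pos k).ne']
  rw [rescale, A.map_smul_univ, norm_smul, mul_comm]
  gcongr
  · refine hA _ fun k => ?_
    calc ∑ i, ‖((((c k)⁻¹ : ℝ) : 𝕂) • x k) i‖ ^ q = (∑ i, ‖x k i‖ ^ q) / c k ^ q := by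
          simp [Real.mul_rpow, abs_of_pos (c_pos k), Real.inv_rpow (c_pos k).le, ← Finset.mul_sum,
            (c_pos k).le, div_eq_inv_mul]
      _ ≤ 1 := div_le_one_of_le₀ (sum_norm_rpow_le_of_lpNorm_le_one (hp k) hq (hx k))
          (Real.rpow_nonneg (c_pos k).le q)
  · simp [norm_prod, abs_of_pos (c_pos _)]

end LpNorm

section Exponents

variable {ι : Type*}

/-- The exponent `1 / ρ` of the total dimension, where `ρ = min_k max {2, p_k*}`; it is `0` when
`ρ = ∞`. -/
def invRho (p : ι → ℝ≥0∞) : ℝ :=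
  (1 / ⨅ k, max 2 (conjExp (p k))).toReal

theorem invRho_nonneg (p : ι → ℝ≥0∞) : 0 ≤ invRho p :=
  ENNReal.toReal_nonneg

theorem one_div_iInf_max_two_conjExp_le (p : ι → ℝ≥0∞) :
    1 / ⨅ k, max 2 (conjExp (p k)) ≤ 1 / 2 :=
  ENNReal.div_le_div_left (le_iInf fun _ => le_max_left _ _) 1

theorem invRho_le_half (p : ι → ℝ≥0∞) : invRho p ≤ 1 / 2 := by
  simpa [invRho] using ENNReal.toReal_mono (by simp) (one_div_iInf_max_two_conjExp_le p)

-- If `ρ ≠ 2` then `p_k* ≥ ρ`, and the left-hand side vanishes.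
theorem max_one_sub_invRho_sub_le {p : ι → ℝ≥0∞} {k : ι} (hp : 1 ≤ p k) :
    max (1 - invRho p - (1 / p k).toReal) 0 ≤ max (1 / 2 - (1 / p k).toReal) 0 := by
  set ρ := ⨅ k, max 2 (conjExp (p k))
  have two_le : 2 ≤ ρ := le_iInf fun _ => le_max_left _ _
  obtain ρ_le_two | ρ_le_conj := le_max_iff.1 (iInf_le (fun k => max 2 (conjExp (p k))) k)
  · have : invRho p = 1 / 2 := by
      rw [invRho, le_antisymm ρ_le_two two_le]
      simp
    rw [this]
    norm_num
  · have sub_le : 1 - 1 / p k ≤ 1 / ρ := by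
      rw [one_div ρ]
      exact ENNReal.le_inv_iff_le_inv.1 ρ_le_conj
    have ne_top : 1 / ρ ≠ ∞ :=
      ne_top_of_le_ne_top (by simp) (one_div_iInf_max_two_conjExp_le p)
    have real_sub_le : 1 - (1 / p k).toReal ≤ invRho p := by
      rw [← ENNReal.toReal_one, ← ENNReal.toReal_sub_of_le (by simpa using hp) ENNReal.one_ne_top]
      exact ENNReal.toReal_mono ne_top sub_le
    exact max_le ((by linarith : _ ≤ (0 : ℝ)).trans (le_max_right _ _)) (le_max_right _ _)

end Exponents

section MixedDimensions

variable {𝕂 : Type*} [RCLike 𝕂] {m : ℕ} {n : Fin m → ℕ}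

/-- The isometric embedding of `𝕂` into `ℂ`, as a ring homomorphism. -/
def toComplexHom (𝕂 : Type*) [RCLike 𝕂] : 𝕂 →+* ℂ where
  toFun z := RCLike.re z + RCLike.im z * Complex.I
  map_one' := by simp
  map_zero' := by simp
  map_mul' x y := by apply Complex.ext <;> simp
  map_add' x y := by apply Complex.ext <;> simp

theorem norm_toComplexHom (z : 𝕂) : ‖toComplexHom 𝕂 z‖ = ‖z‖ :=
  RCLike.norm_to_complex z

theorem norm_signForm_le_rpow {ε : (∀ k, Fin (n k)) → ℤˣ} {D : ℝ}
    (hD : ∀ x : ∀ k, Fin (n k) → ℝ, (∀ k, ∑ i, x k i ^ 2 ≤ 1) → |signForm ℝ ε x| ≤ D)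
    {r : ℝ} (hr : r ∈ Set.Icc 0 (1 / 2)) {x : ∀ k, Fin (n k) → 𝕂}
    (hx : ∀ k, ∑ i, ‖x k i‖ ^ (1 / (1 - r)) ≤ 1) :
    ‖signForm 𝕂 ε x‖ ≤ (2 ^ m * D) ^ (2 * r) := by
  rw [← norm_toComplexHom, map_signForm]
  have ell_one (y : ∀ k, Fin (n k) → ℂ) (hy : ∀ k, ∑ i, ‖y k i‖ ^ (1 : ℝ) ≤ 1) :
      ‖signForm ℂ ε y‖ ≤ 1 := by
    simp_rw [Real.rpow_one] at hy
    exact (norm_signForm_le_prod_sum_norm ε y).trans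
      (Finset.prod_le_one (fun k _ => by positivity) fun k _ => hy k)
  have ell_two (y : ∀ k, Fin (n k) → ℂ) (hy : ∀ k, ∑ i, ‖y k i‖ ^ (2 : ℝ) ≤ 1) :
      ‖signForm ℂ ε y‖ ≤ 2 ^ m * D :=
    norm_signForm_complex_le hD (by simpa using hy)
  simpa [signForm] using norm_coeffForm_le_rpow_mul_rpow (fun j => ((ε j : ℤ) : ℂ))
    (p₀ := fun _ => 1) (p₁ := fun _ => 2) (q := fun _ => 1 / (1 - r)) (by simp) (by simp)
    (θ := 2 * r) ⟨by linarith [hr.1], by linarith [hr.2]⟩ (fun _ => by rw [one_div_one_div]; ring)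
    ell_one ell_two (x := fun k i => toComplexHom 𝕂 (x k i)) (by simpa [norm_toComplexHom] using hx)

theorem mul_sqrt_rpow_two_mul_le {C N r : ℝ} (hC : 1 ≤ C) (hN : 0 ≤ N) (hr : r ≤ 1 / 2) :
    (C * √N) ^ (2 * r) ≤ C * N ^ r :=
  calc (C * √N) ^ (2 * r) = C ^ (2 * r) * N ^ r := by
        rw [Real.mul_rpow (by linarith) (by positivity), Real.sqrt_eq_rpow, ← Real.rpow_mul hN]
        ring_nf
    _ ≤ C ^ (1 : ℝ) * N ^ r := by
        gcongr
        linarith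
    _ = C * N ^ r := by rw [Real.rpow_one]

theorem opNorm_signForm_le (hn : ∀ k, 0 < n k) {ε : (∀ k, Fin (n k)) → ℤˣ}
    (hε : ∀ x : ∀ k, Fin (n k) → ℝ, (∀ k, ∑ i, x k i ^ 2 ≤ 1) →
      |signForm ℝ ε x| ≤ 2 ^ (m + 2) * √(∑ k, (n k : ℝ)))
    {p : Fin m → ℝ≥0∞} (hp : ∀ k, 1 ≤ p k) :
    opNorm p (signForm 𝕂 ε) ≤ 4 ^ (m + 1) * (∑ k, (n k : ℝ)) ^ invRho p
      * ∏ k, (n k : ℝ) ^ max ((1 : ℝ) / 2 - (1 / p k).toReal) 0 := by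
  set N := ∑ k, (n k : ℝ)
  have r_mem : invRho p ∈ Set.Icc 0 (1 / 2) := ⟨invRho_nonneg p, invRho_le_half p⟩
  have q_pos : 0 < 1 / (1 - invRho p) := one_div_pos.2 (by linarith [r_mem.2])
  have form_le (x : ∀ k, Fin (n k) → 𝕂) (hx : ∀ k, ∑ i, ‖x k i‖ ^ (1 / (1 - invRho p)) ≤ 1) :
      ‖signForm 𝕂 ε x‖ ≤ 4 ^ (m + 1) * N ^ invRho p :=
    calc ‖signForm 𝕂 ε x‖ ≤ (2 ^ m * (2 ^ (m + 2) * √N)) ^ (2 * invRho p) :=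
          norm_signForm_le_rpow hε r_mem hx
      _ = (4 ^ (m + 1) * √N) ^ (2 * invRho p) := by
          rw [show (4 : ℝ) = 2 ^ 2 by norm_num, ← pow_mul, ← mul_assoc, ← pow_add]
          ring_nf
      _ ≤ 4 ^ (m + 1) * N ^ invRho p :=
          mul_sqrt_rpow_two_mul_le (one_le_pow₀ (by norm_num)) (by positivity) r_mem.2
  refine (opNorm_le_mul_prod_rpow hn (fun k => one_pos.trans_le (hp k)) q_pos form_le).trans ?_
  have exponent_le (k : Fin m) :
      max (1 / (1 / (1 - invRho p)) - (1 / p k).toReal) 0 ≤ max (1 / 2 - (1 / p k).toReal) 0 := by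
    simpa only [one_div_one_div] using max_one_sub_invRho_sub_le (hp k)
  exact mul_le_mul_of_nonneg_left (Finset.prod_le_prod (fun k _ => by positivity) fun k _ =>
    Real.rpow_le_rpow_of_exponent_le (Nat.one_le_cast.2 (hn k)) (exponent_le k)) (by positivity)

theorem ksz_upper_bound_mixed_dims_general (hm : 0 < m) (hn : ∀ k, 0 < n k) :
    ∃ ε : (∀ k, Fin (n k)) → 𝕂, (∀ j, ε j = 1 ∨ ε j = -1) ∧
      ∀ p : Fin m → ℝ≥0∞, (∀ k, 1 ≤ p k) →
        opNorm p (coeffForm ε) ≤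
          4 ^ (m + 1) * (∑ k, (n k : ℝ)) ^ (1 / ⨅ k, max 2 (conjExp (p k))).toReal
            * ∏ k, (n k : ℝ) ^ max ((1 : ℝ) / 2 - (1 / p k).toReal) 0 := by
  obtain ⟨ε, hε⟩ := exists_signs_forall_abs_signForm_le hm hn
  refine ⟨fun j => ((ε j : ℤ) : 𝕂), fun j => ?_, fun p hp => opNorm_signForm_le hn hε hp⟩
  obtain h | h := Int.units_eq_one_or (ε j) <;> simp [h]

end MixedDimensions

/-- **Kahane–Salem–Zygmund-type inequality with different dimensions (inequality (new)).**
For positive integers `m, n_1, …, n_m` and `p_1, …, p_m ∈ [1,∞]` there are a constant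
`C > 0` depending only on `m` and signs `ε_j ∈ {−1,1}` such that the `m`-linear form
`A z = ∑_j ε_j z^{(1)}_{j 1} ⋯ z^{(m)}_{j m}` satisfies
`‖A‖ ≤ C · (∑ k n_k) ^ (1/ρ) · ∏ k n_k ^ max (1/2 − 1/p_k) 0`,
with `ρ = min_k max 2 (p_k)*`. -/
theorem ksz_upper_bound_mixed_dims {𝕂 : Type*} [RCLike 𝕂] (m : ℕ) (hm : 0 < m) :
    ∃ C : ℝ, 0 < C ∧
      ∀ n : Fin m → ℕ, (∀ k, 0 < n k) → ∀ p : Fin m → ℝ≥0∞, (∀ k, 1 ≤ p k) →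
        ∃ ε : (∀ k, Fin (n k)) → 𝕂, (∀ j, ε j = 1 ∨ ε j = -1) ∧
          opNorm p (coeffForm ε) ≤
            C * (∑ k, (n k : ℝ)) ^ (1 / ⨅ k, max 2 (conjExp (p k))).toReal
              * ∏ k, (n k : ℝ) ^ max ((1 : ℝ) / 2 - (1 / p k).toReal) 0 := by
  refine ⟨4 ^ (m + 1), by positivity, fun n hn p hp => ?_⟩
  obtain ⟨ε, hε, bound⟩ := ksz_upper_bound_mixed_dims_general (𝕂 := 𝕂) hm hn
  exact ⟨ε, hε, bound p hp⟩
end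
end
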